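/- Let c ∈ (0, √2), let c_n ∈ (0, √2) with c_n → c, and let ψ_n be nontrivial finite energy solutions of the Gross–Pitaevskii traveling wave equation with speed c_n on ℝ³, normalized so that ψ_n(x) → 1 as |x| → ∞, with I^{c_n}(ψ_n) uniformly bounded in n. Fix r ∈ (0, c/√2) and set S_n^r = {x ∈ ℝ³ : |ψ_n(x)| < r}. Then there exists N ∈ ℕ such that for every n there are at most N pairwise disjoint closed balls B̄(ξ_k^n, R_k^n), with radii R_k^n ∈ (1, N), whose union contains S_n^r. -/

import Mathlib

/-!
The transverse derivatives of a finite energy travelling wave carry a bounded amount of energy,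
and every point of `{|ψ| < r}`, `r < c / √2`, costs a fixed amount of it. Coordinates are numbered
`x₀, x₁, x₂`, the wave travelling in direction `x₀`; `ψ = U + iV` and `κ = c / √2 < 1`.

*Bounds for `ψ`.* The maximum principle for `|ψ|²` gives `|ψ|² ≤ 3/2` (`RealSol.sup_bound`), and
Bernstein's method bounds `∇ψ` (`RealSol.grad_bound`), so that `ψ` is uniformly Lipschitz.

*Bound on the transverse energy.* The stress tensor `⟨∂ᵢψ, ∂ⱼψ⟩` satisfies
`∑ᵢ ∂ᵢ⟨∂ᵢψ, ∂ⱼψ⟩ = ∂ⱼ e - c m`, where `e` is the energy density and `m = ∂₀U ∂ⱼV - ∂ⱼU ∂₀V`.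
Since `m` is a curl, `m = ∂₀α - ∂ⱼγ`, this is a conservation law (`RealSol.integral_flux`).
Testing it against `xⱼ`, `j = 1, 2`, with `α = (U - 1) ∂ⱼV`, `γ = (U - 1) ∂₀V` gives the Pohozaev
identity `∫ |∂ⱼψ|² = I^c(ψ)` (`RealSol.pohozaev`), hence `∫ |∂ⱼψ|² ≤ 2C`.

*Strips.* Away from the zeros of `ψ` the vorticity `m` is also the curl of
`½ (|ψ|² - 1) ∇θ` (`phaseMom`), and completing the square yields
`e + c · ½ (|ψ|² - 1) ∂₀θ ≥ ¼ (1 - |ψ|²)² (1 - κ² / |ψ|²)`, which is nonnegative where `|ψ| ≥ κ`.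
Suppose a strip `k ≤ x₁ ≤ k + 1` meets `{|ψ| ≤ κ}`. In a slightly wider strip, below the lowest
point of `{|ψ| ≤ κ}` in the `x₂` variable, the conservation law for `j = 2` may be used with this
choice of `α, γ`. Tested against a cut-off of that region it bounds the integral of the above
potential near the top by a multiple of the transverse energy in the strip. By continuity `|ψ|`
takes the value `(1 + sup κ) / 2` on the line through the lowest point in direction `x₀`, so the
potential is definitely positive on a ball. Hence the strip carries a fixed amount of transverse
energy (`strip`), and only boundedly many strips meet `{|ψ| ≤ κ}`.

*Covering.* Therefore a segment of a fixed length `l` in direction `x₁` leaves `{|ψ| ≤ κ}`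
(`exists_exit`). If it starts in `{|ψ| < r}`, then `|ψ|` increases by a fixed amount along it and
along all parallel segments nearby, which forces a lower bound for `∫ |∂₁ψ|²` in a ball of radius
`l + 1` (`local_lower`). Consequently separated subsets of `{|ψ| < r}` have boundedly many points,
and `{|ψ| < r}` is covered by boundedly many balls of a fixed radius; merging balls that meet makes
them disjoint (`exists_disjoint_cover`). The constants depend only on bounds for `κ`, which hold for
all but finitely many `n`; each of the remaining sets is bounded and lies in one ball.
-/

open MeasureTheory Filter Complex Metric Topology

noncomputable section

abbrev Ed (d : ℕ) := EuclideanSpace ℝ (Fin d)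

/-- Partial derivative of `ψ` in the `i`-th coordinate direction. -/
def pd {d : ℕ} (ψ : Ed d → ℂ) (i : Fin d) (x : Ed d) : ℂ :=
  fderiv ℝ ψ x (EuclideanSpace.single i 1)

/-- Laplacian of `ψ`. -/
def lap {d : ℕ} (ψ : Ed d → ℂ) (x : Ed d) : ℂ :=
  ∑ i : Fin d, fderiv ℝ (fun y => fderiv ℝ ψ y (EuclideanSpace.single i 1)) x
      (EuclideanSpace.single i 1)

/-- The Gross–Pitaevskii traveling wave equation with speed `c` on `ℝ^d`:
`ic ∂_{x₁}ψ + Δψ + (1 - |ψ|²)ψ = 0`. -/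
def GPeq {d : ℕ} [NeZero d] (c : ℝ) (ψ : Ed d → ℂ) : Prop :=
  ∀ x, Complex.I * (c : ℂ) * pd ψ 0 x + lap ψ x + (1 - (‖ψ x‖ : ℂ) ^ 2) * ψ x = 0

/-- `|∇ψ|²`. -/
def gradSq {d : ℕ} (ψ : Ed d → ℂ) (x : Ed d) : ℝ := ∑ i : Fin d, ‖pd ψ i x‖ ^ 2

/-- Energy density `(1/2)|∇ψ|² + (1/4)(1 - |ψ|²)²`. -/
def eDen {d : ℕ} (ψ : Ed d → ℂ) (x : Ed d) : ℝ :=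
  1 / 2 * gradSq ψ x + 1 / 4 * (1 - ‖ψ x‖ ^ 2) ^ 2

/-- Energy `E(ψ)`. -/
def energy {d : ℕ} (ψ : Ed d → ℂ) : ℝ := ∫ x, eDen ψ x

/-- Finite energy. -/
def FiniteEnergy {d : ℕ} (ψ : Ed d → ℂ) : Prop := Integrable (eDen ψ)

/-- Momentum `P(ψ) = -∫ ∂_{x₁}(Im ψ)(Re ψ - 1)`. -/
def mom {d : ℕ} [NeZero d] (ψ : Ed d → ℂ) : ℝ :=
  -∫ x, (pd ψ 0 x).im * ((ψ x).re - 1)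

/-- Lagrangian `I^c(ψ) = E(ψ) - c P(ψ)`. -/
def lagr {d : ℕ} [NeZero d] (c : ℝ) (ψ : Ed d → ℂ) : ℝ := energy ψ - c * mom ψ

/-- `ψ` is not a constant of modulus 1. -/
def Nontriv {d : ℕ} (ψ : Ed d → ℂ) : Prop := ¬∃ z : ℂ, ‖z‖ = 1 ∧ ψ = fun _ => z

/-- The quadratic form `Q` of the second variation of `I^c` at `ψ`:
`Q(φ) = ∫ |∇φ|² - c⟨φ, i∂₁φ⟩ - (1-|ψ|²)|φ|² + 2⟨φ,ψ⟩²` with `⟨z₁,z₂⟩ = Re (z₁ conj z₂)`. -/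
def Qform {d : ℕ} [NeZero d] (c : ℝ) (ψ φ : Ed d → ℂ) : ℝ :=
  ∫ x, (gradSq φ x - c * (φ x * (starRingEnd ℂ) (Complex.I * pd φ 0 x)).re
    - (1 - ‖ψ x‖ ^ 2) * ‖φ x‖ ^ 2 + 2 * ((φ x * (starRingEnd ℂ) (ψ x)).re) ^ 2)

/-- The Morse index of `ψ` is at most `m`: every subspace of smooth compactly supported
functions on which `Q` is negative definite has dimension at most `m`. -/
def MorseIndexLE {d : ℕ} [NeZero d] (c : ℝ) (ψ : Ed d → ℂ) (m : ℕ) : Prop :=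
  ∀ Y : Submodule ℝ (Ed d → ℂ),
    (∀ φ ∈ Y, ContDiff ℝ (⊤ : ℕ∞) φ ∧ HasCompactSupport φ) →
    (∀ φ ∈ Y, φ ≠ 0 → Qform c ψ φ < 0) → Module.rank ℝ Y ≤ m

/-- `C^k_loc` convergence: uniform convergence of all iterated derivatives on every
compact set. -/
def LocCk {d : ℕ} (ψn : ℕ → Ed d → ℂ) (ψ : Ed d → ℂ) : Prop :=
  ∀ (k : ℕ) (K : Set (Ed d)), IsCompact K →
    TendstoUniformlyOn (fun n => iteratedFDeriv ℝ k (ψn n)) (iteratedFDeriv ℝ k ψ) atTop K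

/-- `|∇f|²` for a real-valued function. -/
def gradSqR {d : ℕ} (f : Ed d → ℝ) (x : Ed d) : ℝ :=
  ∑ i : Fin d, (fderiv ℝ f x (EuclideanSpace.single i 1)) ^ 2

/-- The set where `|ψ| < r`. -/
def Sset {d : ℕ} (ψ : Ed d → ℂ) (r : ℝ) : Set (Ed d) := {x | ‖ψ x‖ < r}


/-! ### Calculus of partial derivatives -/

/-- `∂ᵢ f` for a real function on `ℝ³`. -/
def dd (i : Fin 3) (f : Ed 3 → ℝ) (x : Ed 3) : ℝ := fderiv ℝ f x (EuclideanSpace.single i 1)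

section calculus

variable {f g : Ed 3 → ℝ} {x : Ed 3} {i j : Fin 3}

lemma dd_add (hf : DifferentiableAt ℝ f x) (hg : DifferentiableAt ℝ g x) :
    dd i (fun y => f y + g y) x = dd i f x + dd i g x := by
  simp only [dd]; rw [fderiv_fun_add hf hg]; rfl

lemma dd_sub (hf : DifferentiableAt ℝ f x) (hg : DifferentiableAt ℝ g x) :
    dd i (fun y => f y - g y) x = dd i f x - dd i g x := by
  simp only [dd]; rw [fderiv_fun_sub hf hg]; rfl

lemma dd_mul (hf : DifferentiableAt ℝ f x) (hg : DifferentiableAt ℝ g x) :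
    dd i (fun y => f y * g y) x = dd i f x * g x + f x * dd i g x := by
  simp only [dd]; rw [fderiv_fun_mul hf hg]
  simp only [_root_.add_apply, _root_.smul_apply, smul_eq_mul]
  ring

lemma dd_const (a : ℝ) : dd i (fun _ => a) x = 0 := by simp [dd]

lemma dd_const_mul (a : ℝ) (hf : DifferentiableAt ℝ f x) :
    dd i (fun y => a * f y) x = a * dd i f x := by
  rw [dd_mul (differentiableAt_const a) hf, dd_const]; ring

lemma dd_sq (hf : DifferentiableAt ℝ f x) :
    dd i (fun y => f y ^ 2) x = 2 * f x * dd i f x := by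
  have : (fun y => f y ^ 2) = fun y => f y * f y := by ext y; ring
  rw [this, dd_mul hf hf]; ring

lemma dd_inv (hg : DifferentiableAt ℝ g x) (h0 : g x ≠ 0) :
    dd i (fun y => (g y)⁻¹) x = -(dd i g x) / g x ^ 2 := by
  have h := ((hasDerivAt_inv h0).comp_hasFDerivAt x hg.hasFDerivAt).fderiv
  simp only [Function.comp_def] at h
  simp only [dd]; rw [h]
  simp only [_root_.smul_apply, smul_eq_mul]
  ring

lemma dd_div (hf : DifferentiableAt ℝ f x) (hg : DifferentiableAt ℝ g x) (h0 : g x ≠ 0) :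
    dd i (fun y => f y / g y) x = (dd i f x * g x - f x * dd i g x) / g x ^ 2 := by
  simp only [div_eq_mul_inv]
  rw [dd_mul (g := fun y => (g y)⁻¹) hf (hg.inv h0), dd_inv hg h0]
  field_simp
  ring

/-- A function of the single coordinate `x j`. -/
lemma dd_coord {a : ℝ → ℝ} {a' : ℝ} (ha : HasDerivAt a a' (x j)) :
    dd i (fun y => a (y j)) x = if i = j then a' else 0 := by
  have h1 : HasFDerivAt (fun y : Ed 3 => y j) (EuclideanSpace.proj j : Ed 3 →L[ℝ] ℝ) x :=
    (EuclideanSpace.proj j : Ed 3 →L[ℝ] ℝ).hasFDerivAt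
  have h2 := (ha.hasFDerivAt.comp x h1).fderiv
  simp only [Function.comp_def] at h2
  simp only [dd]; rw [h2]
  simp [eq_comm]

lemma contDiff_dd (hf : ContDiff ℝ (⊤ : ℕ∞) f) : ContDiff ℝ (⊤ : ℕ∞) (dd i f) := by
  have h := hf.fderiv_right (m := (⊤ : ℕ∞)) (by simp)
  exact h.clm_apply contDiff_const

lemma dd_comm (hf : ContDiff ℝ (⊤ : ℕ∞) f) : dd i (dd j f) x = dd j (dd i f) x := by
  have h : ContDiffAt ℝ (⊤ : ℕ∞) f x := hf.contDiffAt
  have hs := h.isSymmSndFDerivAt (by simpa using WithTop.coe_le_coe.2 (le_top : (2 : ℕ∞) ≤ ⊤))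
  have hd : DifferentiableAt ℝ (fderiv ℝ f) x :=
    ((hf.fderiv_right (m := (⊤ : ℕ∞)) (by simp)).differentiable (by simp)) x
  have key : ∀ v w : Ed 3, fderiv ℝ (fun y => fderiv ℝ f y v) x w
      = fderiv ℝ (fderiv ℝ f) x w v := by
    intro v w
    rw [fderiv_clm_apply hd (differentiableAt_const v)]
    simp
  show fderiv ℝ (fun y => fderiv ℝ f y _) x _ = fderiv ℝ (fun y => fderiv ℝ f y _) x _
  rw [key, key]
  exact hs.eq _ _

lemma ContDiff.dAt (hf : ContDiff ℝ (⊤ : ℕ∞) f) : DifferentiableAt ℝ f x :=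
  (hf.differentiable (by simp)) x

/-- A necessary condition at an interior maximum. -/
lemma dd_dd_nonpos_of_isLocalMax (hf : ContDiff ℝ (⊤ : ℕ∞) f) (hx : IsLocalMax f x) :
    dd i (dd i f) x ≤ 0 := by
  by_contra! hpos
  set e : Ed 3 := EuclideanSpace.single i 1
  have hl : ∀ t : ℝ, HasDerivAt (fun s : ℝ => x + s • e) e t := by
    intro t
    simpa using ((hasDerivAt_id t).smul_const e).const_add x
  have hcomp : ∀ (h : Ed 3 → ℝ), ContDiff ℝ (⊤ : ℕ∞) h → ∀ t : ℝ,
      HasDerivAt (fun s : ℝ => h (x + s • e)) (dd i h (x + t • e)) t := by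
    intro h hh t
    exact (hh.dAt (x := x + t • e)).hasFDerivAt.comp_hasDerivAt t (hl t)
  set φ : ℝ → ℝ := fun s => f (x + s • e)
  have hφ' : deriv φ = fun t => dd i f (x + t • e) := funext fun t => (hcomp f hf t).deriv
  have hφ'' : deriv (deriv φ) 0 = dd i (dd i f) x := by
    rw [hφ', (hcomp _ (contDiff_dd hf) 0).deriv]; simp
  have hc : ContinuousAt φ 0 := (hcomp f hf 0).continuousAt
  have hx' : IsLocalMax f (x + (0 : ℝ) • e) := by simpa using hx
  have hmax : IsLocalMax φ 0 := by
    have : ContinuousAt (fun s : ℝ => x + s • e) 0 := (hl 0).continuousAt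
    exact IsLocalMax.comp_continuous (f := f) (g := fun s : ℝ => x + s • e) hx' this
  have h0 : deriv φ 0 = 0 := hmax.deriv_eq_zero
  have hmin : IsLocalMin φ 0 := isLocalMin_of_deriv_deriv_pos (by rw [hφ'']; exact hpos) h0 hc
  have hconst : φ =ᶠ[𝓝 0] fun _ => φ 0 := by
    filter_upwards [hmax, hmin] with t h1 h2 using le_antisymm h1 h2
  have : deriv (deriv φ) 0 = 0 := by
    have h1 := hconst.deriv
    have h2 := h1.deriv_eq
    rw [h2]; simp
  rw [hφ''] at this
  exact hpos.ne' this

/-- Integration by parts against a compactly supported `C¹` function. The other factor needs to be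
regular only near the support. -/
lemma ibp (i : Fin 3) {Q F : Ed 3 → ℝ} (hF : ContDiff ℝ 1 F) (hFc : HasCompactSupport F)
    (hQ : ∀ x ∈ tsupport F, ContDiffAt ℝ 1 Q x) :
    Integrable (fun x => Q x * dd i F x) ∧ Integrable (fun x => dd i Q x * F x) ∧
    ∫ x, (Q x * dd i F x + dd i Q x * F x) = 0 := by
  have hdF : Continuous (dd i F) := (hF.continuous_fderiv (by simp)).clm_apply continuous_const
  have hdFs : tsupport (dd i F) ⊆ tsupport F := by
    refine (closure_mono ?_).trans (tsupport_fderiv_subset ℝ (f := F))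
    intro y hy h
    exact hy (by simp [dd, h])
  have i1 : Integrable (fun x => Q x * dd i F x) := by
    refine Continuous.integrable_of_hasCompactSupport ?_ ?_
    · refine continuous_of_tsupport fun x hx => ?_
      have : x ∈ tsupport F := hdFs (tsupport_mul_subset_right hx)
      exact (hQ x this).continuousAt.mul hdF.continuousAt
    · have : HasCompactSupport (dd i F) := hFc.mono' ((subset_tsupport _).trans hdFs)
      exact this.mul_left
  have i2 : Integrable (fun x => dd i Q x * F x) := by
    refine Continuous.integrable_of_hasCompactSupport ?_ (HasCompactSupport.mul_left hFc)
    refine continuous_of_tsupport fun x hx => ?_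
    have hx' : x ∈ tsupport F := (tsupport_mul_subset_right hx)
    refine ContinuousAt.mul ?_ hF.continuous.continuousAt
    exact (((hQ x hx').fderiv_right (m := 0) (by simp)).continuousAt).clm_apply continuousAt_const
  have i3 : Integrable (fun x => Q x * F x) := by
    refine Continuous.integrable_of_hasCompactSupport ?_ (HasCompactSupport.mul_left hFc)
    refine continuous_of_tsupport fun x hx => ?_
    exact (hQ x (tsupport_mul_subset_right hx)).continuousAt.mul hF.continuous.continuousAt
  refine ⟨i1, i2, ?_⟩
  rw [integral_add i1 i2]
  have := integral_mul_fderiv_eq_neg_fderiv_mul_of_integrable (μ := (volume : Measure (Ed 3)))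
    (f := Q) (g := F) (v := EuclideanSpace.single i 1) i2 i1 i3
    (fun x hx => (hQ x hx).differentiableAt (by simp))
    (fun x _ => (hF.differentiable (by simp)) x)
  simp only [dd] at *
  rw [this]; ring

end calculus

/-! ### Pointwise bounds for solutions -/

/-- The travelling wave equation of speed `c` for `ψ = U + iV`, as a real system. -/
structure RealSol (c : ℝ) (U V : Ed 3 → ℝ) : Prop where
  smU : ContDiff ℝ (⊤ : ℕ∞) U
  smV : ContDiff ℝ (⊤ : ℕ∞) V
  eqU : ∀ x, ∑ i, dd i (dd i U) x = c * dd 0 V x - (1 - (U x ^ 2 + V x ^ 2)) * U x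
  eqV : ∀ x, ∑ i, dd i (dd i V) x = -c * dd 0 U x - (1 - (U x ^ 2 + V x ^ 2)) * V x

lemma dd_dd_sq {f : Ed 3 → ℝ} {i : Fin 3} {x : Ed 3} (hf : ContDiff ℝ (⊤ : ℕ∞) f) :
    dd i (dd i fun y => f y ^ 2) x = 2 * (dd i f x ^ 2 + f x * dd i (dd i f) x) := by
  have h : (dd i fun y => f y ^ 2) = fun y => 2 * (f y * dd i f y) := by
    ext y; rw [dd_sq hf.dAt]; ring
  rw [h, dd_const_mul _ (hf.dAt.fun_mul (contDiff_dd hf).dAt), dd_mul hf.dAt (contDiff_dd hf).dAt]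
  ring

lemma dd_dd_add {f g : Ed 3 → ℝ} {i : Fin 3} {x : Ed 3} (hf : ContDiff ℝ (⊤ : ℕ∞) f)
    (hg : ContDiff ℝ (⊤ : ℕ∞) g) :
    dd i (dd i fun y => f y + g y) x = dd i (dd i f) x + dd i (dd i g) x := by
  have h : (dd i fun y => f y + g y) = fun y => dd i f y + dd i g y := by
    ext y; rw [dd_add hf.dAt hg.dAt]
  rw [h, dd_add (contDiff_dd hf).dAt (contDiff_dd hg).dAt]

lemma dd_dd_mul {f g : Ed 3 → ℝ} {i : Fin 3} {x : Ed 3} (hf : ContDiff ℝ (⊤ : ℕ∞) f)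
    (hg : ContDiff ℝ (⊤ : ℕ∞) g) :
    dd i (dd i fun y => f y * g y) x
      = dd i (dd i f) x * g x + 2 * (dd i f x * dd i g x) + f x * dd i (dd i g) x := by
  have h : (dd i fun y => f y * g y) = fun y => dd i f y * g y + f y * dd i g y := by
    ext y; rw [dd_mul hf.dAt hg.dAt]
  have hf' := contDiff_dd (i := i) hf
  have hg' := contDiff_dd (i := i) hg
  rw [h, dd_add (hf'.dAt.fun_mul hg.dAt) (hf.dAt.fun_mul hg'.dAt), dd_mul hf'.dAt hg.dAt,
    dd_mul hf.dAt hg'.dAt]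
  ring

lemma dd_dd_const_mul {f : Ed 3 → ℝ} {i : Fin 3} {x : Ed 3} (a : ℝ)
    (hf : ContDiff ℝ (⊤ : ℕ∞) f) :
    dd i (dd i fun y => a * f y) x = a * dd i (dd i f) x := by
  have h : (dd i fun y => a * f y) = fun y => a * dd i f y := by
    ext y; rw [dd_const_mul _ hf.dAt]
  rw [h, dd_const_mul _ (contDiff_dd hf).dAt]

namespace RealSol

variable {c : ℝ} {U V : Ed 3 → ℝ}

/-- Maximum principle for `|ψ|²`, using that `|ψ| → 1` at infinity. -/
lemma sup_bound (h : RealSol c U V) (hc : c ^ 2 ≤ 2)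
    (hlim : Tendsto (fun x => U x ^ 2 + V x ^ 2) (cocompact (Ed 3)) (𝓝 1)) (x : Ed 3) :
    U x ^ 2 + V x ^ 2 ≤ 3 / 2 := by
  by_contra! hx
  have hcont : Continuous fun x => U x ^ 2 + V x ^ 2 :=
    (h.smU.continuous.pow 2).add (h.smV.continuous.pow 2)
  obtain ⟨y, hy⟩ := hcont.exists_forall_ge' x
    ((hlim.eventually_le_const (by linarith : (1 : ℝ) < U x ^ 2 + V x ^ 2)))
  have hmax : IsLocalMax (fun x => U x ^ 2 + V x ^ 2) y := Eventually.of_forall hy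
  have hU2 : ContDiff ℝ (⊤ : ℕ∞) fun x => U x ^ 2 := h.smU.pow 2
  have hV2 : ContDiff ℝ (⊤ : ℕ∞) fun x => V x ^ 2 := h.smV.pow 2
  have key : ∀ i, dd i U y ^ 2 + U y * dd i (dd i U) y
      + (dd i V y ^ 2 + V y * dd i (dd i V) y) ≤ 0 := by
    intro i
    have := dd_dd_nonpos_of_isLocalMax (i := i) (hU2.add hV2) hmax
    rw [dd_dd_add hU2 hV2, dd_dd_sq h.smU, dd_dd_sq h.smV] at this
    linarith
  have e1 := h.eqU y
  have e2 := h.eqV y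
  rw [Fin.sum_univ_three] at e1 e2
  have k0 := key 0
  have k1 := key 1
  have k2 := key 2
  have hW := hy x
  set W := U y ^ 2 + V y ^ 2 with hWd
  have e3 : dd 0 U y ^ 2 + dd 0 V y ^ 2 + U y * (c * dd 0 V y - (1 - W) * U y)
      + V y * (-c * dd 0 U y - (1 - W) * V y) ≤ 0 := by
    rw [← e1, ← e2]
    nlinarith [sq_nonneg (dd 1 U y), sq_nonneg (dd 2 U y), sq_nonneg (dd 1 V y),
      sq_nonneg (dd 2 V y)]
  have e4 : -(c ^ 2 / 4 * W) - (1 - W) * W ≤ 0 := by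
    have : U y * ((1 - W) * U y) + V y * ((1 - W) * V y) = (1 - W) * W := by rw [hWd]; ring
    have h5 : c ^ 2 / 4 * W = c ^ 2 / 4 * U y ^ 2 + c ^ 2 / 4 * V y ^ 2 := by rw [hWd]; ring
    nlinarith [sq_nonneg (dd 0 U y - c / 2 * V y), sq_nonneg (dd 0 V y + c / 2 * U y)]
  have hWpos : 3 / 2 < W := by linarith
  nlinarith

/-- The algebra of Bernstein's gradient estimate, at a maximum point of
`(1 - |y|²)² |∂ⱼψ|² + 73 |ψ|²`. Here `u, v` and `A, B` are the values of `ψ` and `∂ⱼψ`, primes are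
first derivatives, `a, b, A'', B''` are the pure second derivatives, and `hmax` says that those of
the test function are nonpositive. The weight `73` lets the good term `2 · 73 |∇ψ|²` absorb
all others. -/
lemma bernstein_alg {c η u v A B : ℝ} {y u' v' A' B' a b A'' B'' : Fin 3 → ℝ}
    (hc : c ^ 2 ≤ 2) (hη : 0 ≤ η) (hη1 : η ≤ 1) (hρ : u ^ 2 + v ^ 2 ≤ 3 / 2)
    (hy : η = 1 - (y 0 ^ 2 + y 1 ^ 2 + y 2 ^ 2))
    (hu : ∑ i, a i = c * v' 0 - (1 - (u ^ 2 + v ^ 2)) * u)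
    (hv : ∑ i, b i = -c * u' 0 - (1 - (u ^ 2 + v ^ 2)) * v)
    (hA : ∑ i, A'' i = c * B' 0 - (1 - (u ^ 2 + v ^ 2)) * A + 2 * (u * A + v * B) * u)
    (hB : ∑ i, B'' i = -c * A' 0 - (1 - (u ^ 2 + v ^ 2)) * B + 2 * (u * A + v * B) * v)
    (hG : A ^ 2 + B ^ 2 ≤ ∑ i, (u' i ^ 2 + v' i ^ 2))
    (hmax : ∀ i, (8 * y i ^ 2 - 4 * η) * (A ^ 2 + B ^ 2)
      + 2 * ((-4 * η * y i) * (2 * (A * A' i + B * B' i)))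
      + η ^ 2 * (2 * (A' i ^ 2 + A * A'' i) + 2 * (B' i ^ 2 + B * B'' i))
      + 73 * (2 * (u' i ^ 2 + u * a i) + 2 * (v' i ^ 2 + v * b i)) ≤ 0) :
    A ^ 2 + B ^ 2 ≤ 20 := by
  rw [Fin.sum_univ_three] at hu hv hA hB hG
  have m0 := hmax 0
  have m1 := hmax 1
  have m2 := hmax 2
  have hP : 0 ≤ A ^ 2 + B ^ 2 := by positivity
  have hη2 : η ^ 2 ≤ 1 := by nlinarith only [hη, hη1]
  have h1 : η ^ 2 * c ^ 2 * (A ^ 2 + B ^ 2) ≤ 2 * (A ^ 2 + B ^ 2) := by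
    apply mul_le_mul_of_nonneg_right _ hP
    calc η ^ 2 * c ^ 2 ≤ 1 * 2 := mul_le_mul hη2 hc (sq_nonneg c) zero_le_one
      _ = 2 := by norm_num
  have h2 : η ^ 2 * (1 - (u ^ 2 + v ^ 2)) * (A ^ 2 + B ^ 2) ≤ 1 * (A ^ 2 + B ^ 2) := by
    apply mul_le_mul_of_nonneg_right _ hP
    nlinarith only [hη2, mul_nonneg (sq_nonneg η) (add_nonneg (sq_nonneg u) (sq_nonneg v))]
  have h3 : 0 ≤ η ^ 2 * (u * A + v * B) ^ 2 := by positivity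
  have h4 : c ^ 2 * (u ^ 2 + v ^ 2) ≤ 3 := by
    calc c ^ 2 * (u ^ 2 + v ^ 2) ≤ 2 * (3 / 2) := mul_le_mul hc hρ (by positivity) zero_le_two
      _ = 3 := by norm_num
  have h5 : (1 - (u ^ 2 + v ^ 2)) * (u ^ 2 + v ^ 2) ≤ 1 / 4 := by
    nlinarith only [sq_nonneg (u ^ 2 + v ^ 2 - 1 / 2)]
  have h6 : 0 ≤ η * (A ^ 2 + B ^ 2) := by positivity
  -- the sum of the three inequalities, with the Laplacians replaced through the equations
  have hS : (8 * (1 - η) - 12 * η) * (A ^ 2 + B ^ 2)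
      - 16 * η * (y 0 * (A * A' 0 + B * B' 0) + y 1 * (A * A' 1 + B * B' 1)
          + y 2 * (A * A' 2 + B * B' 2))
      + 2 * η ^ 2 * (A' 0 ^ 2 + A' 1 ^ 2 + A' 2 ^ 2 + B' 0 ^ 2 + B' 1 ^ 2 + B' 2 ^ 2
        + c * (A * B' 0 - B * A' 0) - (1 - (u ^ 2 + v ^ 2)) * (A ^ 2 + B ^ 2)
        + 2 * (u * A + v * B) ^ 2)
      + 146 * (u' 0 ^ 2 + v' 0 ^ 2 + (u' 1 ^ 2 + v' 1 ^ 2) + (u' 2 ^ 2 + v' 2 ^ 2)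
        + c * (u * v' 0 - v * u' 0) - (1 - (u ^ 2 + v ^ 2)) * (u ^ 2 + v ^ 2)) ≤ 0 := by
    have hη' : 1 - η = y 0 ^ 2 + y 1 ^ 2 + y 2 ^ 2 := by linarith
    rw [hη']
    linear_combination m0 + m1 + m2 - 2 * η ^ 2 * A * hA - 2 * η ^ 2 * B * hB
      - 146 * u * hu - 146 * v * hv
  have q : ∀ i, 0 ≤ (η * A' i - 8 * y i * A) ^ 2 + (η * B' i - 8 * y i * B) ^ 2 :=
    fun i => by positivity
  have q0 := q 0
  have q1 := q 1
  have q2 := q 2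
  have q3 : 0 ≤ (η * (c * A + B' 0)) ^ 2 + (η * (c * B - A' 0)) ^ 2 := by positivity
  have q4 : 0 ≤ (c * u + v' 0) ^ 2 + (c * v - u' 0) ^ 2 := by positivity
  have q5 : 0 ≤ u' 1 ^ 2 + v' 1 ^ 2 + (u' 2 ^ 2 + v' 2 ^ 2) := by positivity
  have q6 : 0 ≤ η ^ 2 * (A' 1 ^ 2 + A' 2 ^ 2 + B' 1 ^ 2 + B' 2 ^ 2) := by positivity
  have q7 : 64 * (y 0 ^ 2 + y 1 ^ 2 + y 2 ^ 2) * (A ^ 2 + B ^ 2)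
      = 64 * (1 - η) * (A ^ 2 + B ^ 2) := by rw [hy]; ring
  have hfin : 13 * (A ^ 2 + B ^ 2) ≤ 260 := by
    linarith [hS, q0, q1, q2, q3, q4, q5, q6, q7, h1, h2, h3, h4, h5, h6, hG]
  linarith

/-- The Laplacian of a derivative of a solution. -/
lemma lap_dd (h : RealSol c U V) (j : Fin 3) (x : Ed 3) :
    ∑ i, dd i (dd i (dd j U)) x = c * dd 0 (dd j V) x - (1 - (U x ^ 2 + V x ^ 2)) * dd j U x
      + 2 * (U x * dd j U x + V x * dd j V x) * U x ∧
    ∑ i, dd i (dd i (dd j V)) x = -c * dd 0 (dd j U) x - (1 - (U x ^ 2 + V x ^ 2)) * dd j V x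
      + 2 * (U x * dd j U x + V x * dd j V x) * V x := by
  have comm : ∀ f : Ed 3 → ℝ, ContDiff ℝ (⊤ : ℕ∞) f → ∀ i,
      dd i (dd i (dd j f)) x = dd j (dd i (dd i f)) x := by
    intro f hf i
    have : dd i (dd j f) = dd j (dd i f) := funext fun y => dd_comm hf
    rw [this, dd_comm (contDiff_dd hf)]
  have sum : ∀ f : Ed 3 → ℝ, ContDiff ℝ (⊤ : ℕ∞) f →
      ∑ i, dd i (dd i (dd j f)) x = dd j (fun y => ∑ i, dd i (dd i f) y) x := by
    intro f hf
    have s : ∀ i, DifferentiableAt ℝ (dd i (dd i f)) x := fun i => (contDiff_dd (contDiff_dd hf)).dAt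
    simp only [Fin.sum_univ_three, comm f hf]
    rw [dd_add ((s 0).fun_add (s 1)) (s 2), dd_add (s 0) (s 1)]
  have hU := h.smU
  have hV := h.smV
  have hU0 := contDiff_dd (i := 0) hU
  have hV0 := contDiff_dd (i := 0) hV
  have hρ : ContDiff ℝ (⊤ : ℕ∞) fun y => 1 - (U y ^ 2 + V y ^ 2) :=
    contDiff_const.sub ((hU.pow 2).add (hV.pow 2))
  have dρ : dd j (fun y => 1 - (U y ^ 2 + V y ^ 2)) x
      = -(2 * (U x * dd j U x + V x * dd j V x)) := by
    rw [dd_sub (differentiableAt_const _) ((hU.pow 2).add (hV.pow 2)).dAt, dd_const,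
      dd_add (hU.pow 2).dAt (hV.pow 2).dAt, dd_sq hU.dAt, dd_sq hV.dAt]
    ring
  constructor
  · rw [sum U hU, funext h.eqU, dd_sub (contDiff_const.mul hV0).dAt (hρ.mul hU).dAt,
      dd_const_mul _ hV0.dAt, dd_mul hρ.dAt hU.dAt, dρ, dd_comm hV]
    ring
  · rw [sum V hV, funext h.eqV, dd_sub (contDiff_const.mul hU0).dAt (hρ.mul hV).dAt,
      dd_const_mul _ hU0.dAt, dd_mul hρ.dAt hV.dAt, dρ, dd_comm hU]
    ring

set_option maxHeartbeats 800000 in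
/-- Bernstein's interior gradient estimate, applied on unit balls: the maximum of
`(1 - |x - x⁰|²)² |∂ⱼψ|² + 73 |ψ|²` over the unit ball about `x⁰` is controlled. -/
lemma grad_bound (h : RealSol c U V) (hc : c ^ 2 ≤ 2)
    (hρ : ∀ x, U x ^ 2 + V x ^ 2 ≤ 3 / 2) (j : Fin 3) (x₀ : Ed 3) :
    dd j U x₀ ^ 2 + dd j V x₀ ^ 2 ≤ 130 := by
  set η : Ed 3 → ℝ := fun x => 1 - ((x 0 - x₀ 0) ^ 2 + (x 1 - x₀ 1) ^ 2 + (x 2 - x₀ 2) ^ 2)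
    with hη
  have hco : ∀ i : Fin 3, ContDiff ℝ (⊤ : ℕ∞) fun x : Ed 3 => x i - x₀ i := fun i =>
    (EuclideanSpace.proj i : Ed 3 →L[ℝ] ℝ).contDiff.sub contDiff_const
  have dco : ∀ (i k : Fin 3) x, dd i (fun x : Ed 3 => x k - x₀ k) x = if i = k then 1 else 0 :=
    fun i k x => dd_coord (a := fun t => t - x₀ k) ((hasDerivAt_id _).sub_const _)
  have ηs : ContDiff ℝ (⊤ : ℕ∞) η :=
    contDiff_const.sub ((((hco 0).pow 2).add ((hco 1).pow 2)).add ((hco 2).pow 2))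
  have dη : ∀ i x, dd i η x = -2 * (x i - x₀ i) := by
    intro i x
    simp only [hη]
    rw [dd_sub (differentiableAt_const _)
      (((((hco 0).pow 2).add ((hco 1).pow 2)).add ((hco 2).pow 2)).dAt), dd_const,
      dd_add (((hco 0).pow 2).add ((hco 1).pow 2)).dAt ((hco 2).pow 2).dAt,
      dd_add ((hco 0).pow 2).dAt ((hco 1).pow 2).dAt, dd_sq (hco 0).dAt, dd_sq (hco 1).dAt,
      dd_sq (hco 2).dAt, dco, dco, dco]
    fin_cases i <;> simp
  have ddη : ∀ i x, dd i (dd i η) x = -2 := by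
    intro i x
    rw [funext (dη i), dd_const_mul _ (hco i).dAt, dco]; simp
  have hA := contDiff_dd (i := j) h.smU
  have hB := contDiff_dd (i := j) h.smV
  have hP := (hA.pow 2).add (hB.pow 2)
  have hR := (h.smU.pow 2).add (h.smV.pow 2)
  set W : Ed 3 → ℝ := fun x => η x ^ 2 * (dd j U x ^ 2 + dd j V x ^ 2)
    + 73 * (U x ^ 2 + V x ^ 2) with hW
  have Ws : ContDiff ℝ (⊤ : ℕ∞) W := ((ηs.pow 2).mul hP).add (contDiff_const.mul hR)
  have ddW : ∀ i x, dd i (dd i W) x = (8 * (x i - x₀ i) ^ 2 - 4 * η x) *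
        (dd j U x ^ 2 + dd j V x ^ 2)
      + 2 * ((-4 * η x * (x i - x₀ i)) *
        (2 * (dd j U x * dd i (dd j U) x + dd j V x * dd i (dd j V) x)))
      + η x ^ 2 * (2 * (dd i (dd j U) x ^ 2 + dd j U x * dd i (dd i (dd j U)) x)
        + 2 * (dd i (dd j V) x ^ 2 + dd j V x * dd i (dd i (dd j V)) x))
      + 73 * (2 * (dd i U x ^ 2 + U x * dd i (dd i U) x)
        + 2 * (dd i V x ^ 2 + V x * dd i (dd i V) x)) := by
    intro i x
    rw [hW, dd_dd_add ((ηs.pow 2).mul hP) (contDiff_const.mul hR),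
      dd_dd_mul (ηs.pow 2) hP, dd_dd_const_mul _ hR, dd_dd_add (h.smU.pow 2) (h.smV.pow 2),
      dd_dd_sq h.smU, dd_dd_sq h.smV, dd_dd_add (hA.pow 2) (hB.pow 2), dd_dd_sq hA, dd_dd_sq hB,
      dd_dd_sq ηs, dd_sq ηs.dAt, dd_add (hA.pow 2).dAt (hB.pow 2).dAt, dd_sq hA.dAt, dd_sq hB.dAt,
      dη, ddη]
    ring
  obtain ⟨z, hz, hzmax⟩ := (isCompact_closedBall x₀ 1).exists_isMaxOn
    ⟨x₀, mem_closedBall_self zero_le_one⟩ Ws.continuous.continuousOn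
  have hdist : ∀ x : Ed 3, (x 0 - x₀ 0) ^ 2 + (x 1 - x₀ 1) ^ 2 + (x 2 - x₀ 2) ^ 2
      = dist x x₀ ^ 2 := by
    intro x
    rw [EuclideanSpace.dist_eq, Real.sq_sqrt (by positivity), Fin.sum_univ_three]
    simp [Real.dist_eq]
  have hW0 : dd j U x₀ ^ 2 + dd j V x₀ ^ 2 ≤ W x₀ := by
    simp only [hW, hη]
    nlinarith [sq_nonneg (U x₀), sq_nonneg (V x₀)]
  have hle : W x₀ ≤ W z := hzmax (mem_closedBall_self zero_le_one)
  have hηz : η z = 1 - dist z x₀ ^ 2 := by rw [← hdist]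
  have hz1 : dist z x₀ ≤ 1 := hz
  have hWz : W z ≤ 130 := by
    rcases hz1.eq_or_lt with h1 | h1
    · have : η z = 0 := by rw [hηz, h1]; ring
      simp only [hW, this]; nlinarith [hρ z]
    · have hloc : IsLocalMax W z := by
        filter_upwards [Metric.isOpen_ball.mem_nhds (show z ∈ ball x₀ 1 from h1)] with w hw
        exact hzmax (ball_subset_closedBall hw)
      have hη0 : 0 ≤ η z := by rw [hηz]; nlinarith [dist_nonneg (x := z) (y := x₀)]
      have hη1 : η z ≤ 1 := by rw [hηz]; nlinarith [sq_nonneg (dist z x₀)]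
      obtain ⟨eA, eB⟩ := h.lap_dd j z
      have hm : ∀ i, dd i (dd i W) z ≤ 0 := fun i => dd_dd_nonpos_of_isLocalMax Ws hloc
      simp only [ddW] at hm
      have hb := bernstein_alg (y := fun i => z i - x₀ i) (u' := fun i => dd i U z)
        (v' := fun i => dd i V z) (A' := fun i => dd i (dd j U) z) (B' := fun i => dd i (dd j V) z)
        hc hη0 hη1 (hρ z) rfl
        (h.eqU z) (h.eqV z) eA eB ?_ hm
      · have : η z ^ 2 * (dd j U z ^ 2 + dd j V z ^ 2) ≤ 1 * 20 := by
          apply mul_le_mul _ hb (by positivity) zero_le_one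
          nlinarith
        simp only [hW]; linarith [hρ z]
      · exact Finset.single_le_sum (f := fun i => dd i U z ^ 2 + dd i V z ^ 2)
          (fun i _ => by positivity) (Finset.mem_univ j)
  linarith

end RealSol

/-! ### Flux identities -/

/-- The energy density of `U + iV`. -/
def den (U V : Ed 3 → ℝ) (x : Ed 3) : ℝ :=
  1 / 2 * ∑ i, (dd i U x ^ 2 + dd i V x ^ 2) + 1 / 4 * (1 - (U x ^ 2 + V x ^ 2)) ^ 2

/-- The stress `⟨∂ᵢψ, ∂ⱼψ⟩`. -/
def tau (U V : Ed 3 → ℝ) (i j : Fin 3) (x : Ed 3) : ℝ :=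
  dd i U x * dd j U x + dd i V x * dd j V x

/-- The integrand of the flux identity for a translation in direction `j`, tested against `F`.
The functions `α, γ` represent the vorticity `m = ∂₀U ∂ⱼV - ∂ⱼU ∂₀V` as the curl
`∂₀α - ∂ⱼγ`. -/
def flux (c : ℝ) (U V : Ed 3 → ℝ) (j : Fin 3) (α γ F : Ed 3 → ℝ) (x : Ed 3) : ℝ :=
  ∑ i, tau U V i j x * dd i F x - (den U V x + c * γ x) * dd j F x + c * (α x * dd 0 F x)

namespace RealSol

variable {c : ℝ} {U V : Ed 3 → ℝ}

lemma contDiff_den (h : RealSol c U V) : ContDiff ℝ (⊤ : ℕ∞) (den U V) := by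
  unfold den
  simp only [Fin.sum_univ_three]
  have hU := fun i => contDiff_dd (i := i) h.smU
  have hV := fun i => contDiff_dd (i := i) h.smV
  have := h.smU
  have := h.smV
  fun_prop

lemma contDiff_tau (h : RealSol c U V) (i j : Fin 3) : ContDiff ℝ (⊤ : ℕ∞) (tau U V i j) := by
  unfold tau
  have hU := fun i => contDiff_dd (i := i) h.smU
  have hV := fun i => contDiff_dd (i := i) h.smV
  fun_prop

lemma dd_den (h : RealSol c U V) (j : Fin 3) (x : Ed 3) :
    dd j (den U V) x = ∑ i, (dd i U x * dd j (dd i U) x + dd i V x * dd j (dd i V) x)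
      - (1 - (U x ^ 2 + V x ^ 2)) * (U x * dd j U x + V x * dd j V x) := by
  have hU := fun i => contDiff_dd (i := i) h.smU
  have hV := fun i => contDiff_dd (i := i) h.smV
  have hs : ∀ i, ContDiff ℝ (⊤ : ℕ∞) fun y => dd i U y ^ 2 + dd i V y ^ 2 :=
    fun i => ((hU i).pow 2).add ((hV i).pow 2)
  have hr : ContDiff ℝ (⊤ : ℕ∞) fun y => 1 - (U y ^ 2 + V y ^ 2) :=
    contDiff_const.sub ((h.smU.pow 2).add (h.smV.pow 2))
  have dr : dd j (fun y => 1 - (U y ^ 2 + V y ^ 2)) x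
      = -(2 * (U x * dd j U x + V x * dd j V x)) := by
    rw [dd_sub (differentiableAt_const _) ((h.smU.pow 2).add (h.smV.pow 2)).dAt, dd_const,
      dd_add (h.smU.pow 2).dAt (h.smV.pow 2).dAt, dd_sq h.smU.dAt, dd_sq h.smV.dAt]
    ring
  have ds : ∀ i, dd j (fun y => dd i U y ^ 2 + dd i V y ^ 2) x
      = 2 * (dd i U x * dd j (dd i U) x + dd i V x * dd j (dd i V) x) := by
    intro i
    rw [dd_add ((hU i).pow 2).dAt ((hV i).pow 2).dAt, dd_sq (hU i).dAt, dd_sq (hV i).dAt]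
    ring
  have e : den U V = fun y => 1 / 2 * ((dd 0 U y ^ 2 + dd 0 V y ^ 2)
      + (dd 1 U y ^ 2 + dd 1 V y ^ 2) + (dd 2 U y ^ 2 + dd 2 V y ^ 2))
      + 1 / 4 * (1 - (U y ^ 2 + V y ^ 2)) ^ 2 := by
    ext y; simp [den, Fin.sum_univ_three]
  have h012 := ((hs 0).add (hs 1)).add (hs 2)
  rw [e, dd_add (contDiff_const.mul h012).dAt (contDiff_const.mul (hr.pow 2)).dAt,
    dd_const_mul _ h012.dAt, dd_const_mul _ (hr.pow 2).dAt, dd_sq hr.dAt, dr,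
    dd_add ((hs 0).add (hs 1)).dAt (hs 2).dAt, dd_add (hs 0).dAt (hs 1).dAt, ds, ds, ds,
    Fin.sum_univ_three]
  ring

lemma dd_tau (h : RealSol c U V) (i j : Fin 3) (x : Ed 3) :
    dd i (tau U V i j) x = dd i (dd i U) x * dd j U x + dd i U x * dd j (dd i U) x
      + (dd i (dd i V) x * dd j V x + dd i V x * dd j (dd i V) x) := by
  have hU := fun i => contDiff_dd (i := i) h.smU
  have hV := fun i => contDiff_dd (i := i) h.smV
  show dd i (fun y => dd i U y * dd j U y + dd i V y * dd j V y) x = _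
  rw [dd_add ((hU i).mul (hU j)).dAt ((hV i).mul (hV j)).dAt, dd_mul (hU i).dAt (hU j).dAt,
    dd_mul (hV i).dAt (hV j).dAt, dd_comm h.smU (i := i) (j := j), dd_comm h.smV (i := i) (j := j)]

/-- Conservation of momentum: the flux integrand has mean zero. The divergence of the stress minus
`∂ⱼ` of the energy density equals `-c m`, and `m` is a curl. -/
lemma integral_flux (h : RealSol c U V) (j : Fin 3) {F α γ : Ed 3 → ℝ} (hF : ContDiff ℝ 1 F)
    (hFc : HasCompactSupport F) (hα : ∀ x ∈ tsupport F, ContDiffAt ℝ 1 α x)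
    (hγ : ∀ x ∈ tsupport F, ContDiffAt ℝ 1 γ x)
    (hm : ∀ x ∈ tsupport F,
      dd 0 α x - dd j γ x = dd 0 U x * dd j V x - dd j U x * dd 0 V x) :
    Integrable (flux c U V j α γ F) ∧ Integrable (fun x => α x * dd 0 F x) ∧
      ∫ x, flux c U V j α γ F x = 0 := by
  have iτ := fun i => ibp i (Q := tau U V i j) hF hFc
    (fun x _ => ((h.contDiff_tau i j).of_le (by simp)).contDiffAt)
  obtain ⟨e1, e2, e3⟩ := ibp j (Q := den U V) hF hFc
    (fun x _ => ((h.contDiff_den).of_le (by simp)).contDiffAt)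
  obtain ⟨a1, a2, a3⟩ := ibp 0 (Q := α) hF hFc hα
  obtain ⟨g1, g2, g3⟩ := ibp j (Q := γ) hF hFc hγ
  obtain ⟨s1, s2, s3⟩ := iτ 0
  obtain ⟨t1, t2, t3⟩ := iτ 1
  obtain ⟨u1, u2, u3⟩ := iτ 2
  have hi : Integrable (flux c U V j α γ F) := by
    have := (((s1.add t1).add u1).sub (e1.add (g1.const_mul c))).add (a1.const_mul c)
    refine this.congr (Eventually.of_forall fun x => ?_)
    simp only [flux, Fin.sum_univ_three, Pi.add_apply, Pi.sub_apply]
    ring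
  refine ⟨hi, a1, ?_⟩
  have hz : ∀ x, flux c U V j α γ F x =
      (tau U V 0 j x * dd 0 F x + dd 0 (tau U V 0 j) x * F x)
      + (tau U V 1 j x * dd 1 F x + dd 1 (tau U V 1 j) x * F x)
      + (tau U V 2 j x * dd 2 F x + dd 2 (tau U V 2 j) x * F x)
      - (den U V x * dd j F x + dd j (den U V) x * F x)
      + c * (α x * dd 0 F x + dd 0 α x * F x) - c * (γ x * dd j F x + dd j γ x * F x) := by
    intro x
    have e1 := h.eqU x
    have e2 := h.eqV x
    rw [Fin.sum_univ_three] at e1 e2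
    by_cases hx : x ∈ tsupport F
    · have hmx := hm x hx
      simp only [flux, Fin.sum_univ_three, h.dd_tau, h.dd_den]
      linear_combination (-dd j U x * F x) * e1 - dd j V x * F x * e2 - c * F x * hmx
    · have h0 : F x = 0 := image_eq_zero_of_notMem_tsupport hx
      simp only [flux, Fin.sum_univ_three, h0]
      ring
  rw [integral_congr_ae (Eventually.of_forall hz)]
  have sum0 : ∀ {f g : Ed 3 → ℝ}, Integrable f ∧ ∫ x, f x = 0 → Integrable g ∧ ∫ x, g x = 0 →
      Integrable (fun x => f x + g x) ∧ ∫ x, (f x + g x) = 0 := fun hf hg =>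
    ⟨hf.1.add hg.1, by rw [integral_add hf.1 hg.1, hf.2, hg.2, add_zero]⟩
  have diff0 : ∀ {f g : Ed 3 → ℝ}, Integrable f ∧ ∫ x, f x = 0 → Integrable g ∧ ∫ x, g x = 0 →
      Integrable (fun x => f x - g x) ∧ ∫ x, (f x - g x) = 0 := fun hf hg =>
    ⟨hf.1.sub hg.1, by rw [integral_sub hf.1 hg.1, hf.2, hg.2, sub_zero]⟩
  have mul0 : ∀ {f : Ed 3 → ℝ}, Integrable f ∧ ∫ x, f x = 0 →
      Integrable (fun x => c * f x) ∧ ∫ x, c * f x = 0 := fun hf =>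
    ⟨hf.1.const_mul c, by rw [integral_const_mul, hf.2, mul_zero]⟩
  exact (diff0 (sum0 (diff0 (sum0 (sum0 ⟨s1.add s2, s3⟩ ⟨t1.add t2, t3⟩) ⟨u1.add u2, u3⟩)
    ⟨e1.add e2, e3⟩) (mul0 ⟨a1.add a2, a3⟩)) (mul0 ⟨g1.add g2, g3⟩)).2

/-- The global choice of `α, γ`, used for the momentum `P`. -/
lemma curl_global (h : RealSol c U V) (j : Fin 3) (x : Ed 3) :
    dd 0 (fun y => (U y - 1) * dd j V y) x - dd j (fun y => (U y - 1) * dd 0 V y) x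
      = dd 0 U x * dd j V x - dd j U x * dd 0 V x := by
  have hu : ContDiff ℝ (⊤ : ℕ∞) fun y => U y - 1 := h.smU.sub contDiff_const
  have du : ∀ i, dd i (fun y => U y - 1) x = dd i U x := fun i => by
    rw [dd_sub h.smU.dAt (differentiableAt_const _), dd_const, sub_zero]
  rw [dd_mul hu.dAt (contDiff_dd h.smV).dAt, dd_mul hu.dAt (contDiff_dd h.smV).dAt, du, du,
    dd_comm h.smV (i := j) (j := 0)]
  ring

end RealSol

/-- `½ (|ψ|² - 1) ∂ᵢθ`, where `θ` is the phase of `ψ = U + iV`. -/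
def phaseMom (U V : Ed 3 → ℝ) (i : Fin 3) (x : Ed 3) : ℝ :=
  1 / 2 * (U x * dd i V x - V x * dd i U x)
    - 1 / 2 * ((U x * dd i V x - V x * dd i U x) / (U x ^ 2 + V x ^ 2))

namespace RealSol

variable {c : ℝ} {U V : Ed 3 → ℝ}

lemma contDiffAt_phaseMom (h : RealSol c U V) (i : Fin 3) {x : Ed 3}
    (hx : U x ^ 2 + V x ^ 2 ≠ 0) : ContDiffAt ℝ 1 (phaseMom U V i) x := by
  have hU := (h.smU.of_le (m := 1) (by simp)).contDiffAt (x := x)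
  have hV := (h.smV.of_le (m := 1) (by simp)).contDiffAt (x := x)
  have hU' := ((contDiff_dd (i := i) h.smU).of_le (m := 1) (by simp)).contDiffAt (x := x)
  have hV' := ((contDiff_dd (i := i) h.smV).of_le (m := 1) (by simp)).contDiffAt (x := x)
  have hm := (hU.mul hV').sub (hV.mul hU')
  exact (contDiffAt_const.mul hm).sub (contDiffAt_const.mul (hm.div ((hU.pow 2).add (hV.pow 2)) hx))

/-- Away from the zeros of `ψ`, the phase gradient is curl free, so `phaseMom` also represents the
vorticity. -/
lemma curl_phase (h : RealSol c U V) (j : Fin 3) {x : Ed 3} (hx : U x ^ 2 + V x ^ 2 ≠ 0) :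
    dd 0 (phaseMom U V j) x - dd j (phaseMom U V 0) x
      = dd 0 U x * dd j V x - dd j U x * dd 0 V x := by
  have hU := h.smU
  have hV := h.smV
  have hm : ∀ i, ContDiff ℝ (⊤ : ℕ∞) fun y => U y * dd i V y - V y * dd i U y :=
    fun i => (hU.mul (contDiff_dd hV)).sub (hV.mul (contDiff_dd hU))
  have dm : ∀ i k, dd k (fun y => U y * dd i V y - V y * dd i U y) x
      = dd k U x * dd i V x + U x * dd k (dd i V) x
        - (dd k V x * dd i U x + V x * dd k (dd i U) x) := fun i k => by
    rw [dd_sub (hU.mul (contDiff_dd hV)).dAt (hV.mul (contDiff_dd hU)).dAt,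
      dd_mul hU.dAt (contDiff_dd hV).dAt, dd_mul hV.dAt (contDiff_dd hU).dAt]
  have hr : ContDiff ℝ (⊤ : ℕ∞) fun y => U y ^ 2 + V y ^ 2 := (hU.pow 2).add (hV.pow 2)
  have dr : ∀ k, dd k (fun y => U y ^ 2 + V y ^ 2) x = 2 * (U x * dd k U x + V x * dd k V x) :=
    fun k => by
      rw [dd_add (hU.pow 2).dAt (hV.pow 2).dAt, dd_sq hU.dAt, dd_sq hV.dAt]; ring
  have hq : ∀ i, DifferentiableAt ℝ
      (fun y => (U y * dd i V y - V y * dd i U y) / (U y ^ 2 + V y ^ 2)) x :=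
    fun i => by
    have hi : DifferentiableAt ℝ (fun y => (U y ^ 2 + V y ^ 2)⁻¹) x := (hr.dAt (x := x)).inv hx
    simpa only [div_eq_mul_inv] using (hm i).dAt.fun_mul hi
  have dq : ∀ i k, dd k (phaseMom U V i) x = _ := fun i k => by
    show dd k (fun y => 1 / 2 * (U y * dd i V y - V y * dd i U y)
      - 1 / 2 * ((U y * dd i V y - V y * dd i U y) / (U y ^ 2 + V y ^ 2))) x = _
    rw [dd_sub (contDiff_const.mul (hm i)).dAt ((differentiableAt_const _).fun_mul (hq i)),
      dd_const_mul _ (hm i).dAt, dd_const_mul _ (hq i), dd_div (hm i).dAt hr.dAt hx, dm, dr]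
  rw [dq, dq, dd_comm hV (i := j) (j := 0), dd_comm hU (i := j) (j := 0)]
  field_simp
  ring

end RealSol

/-! ### Cut-off functions -/

/-- The derivative of `step`. -/
def stepD (t : ℝ) : ℝ := 6 * max 0 (t * (1 - t))

/-- A `C¹` step from `0` (on `t ≤ 0`) to `1` (on `t ≥ 1`). -/
def step (t : ℝ) : ℝ := ∫ s in (0 : ℝ)..t, stepD s

lemma continuous_stepD : Continuous stepD := by unfold stepD; fun_prop

lemma stepD_nonneg (t : ℝ) : 0 ≤ stepD t := by unfold stepD; positivity

lemma stepD_le (t : ℝ) : stepD t ≤ 2 := by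
  unfold stepD
  have : max 0 (t * (1 - t)) ≤ 1 / 4 := max_le (by norm_num) (by nlinarith [sq_nonneg (t - 1 / 2)])
  linarith

lemma le_stepD {t : ℝ} : 6 * (t * (1 - t)) ≤ stepD t := by
  unfold stepD; linarith [le_max_right 0 (t * (1 - t))]

lemma stepD_of_nonpos {t : ℝ} (ht : t ≤ 0) : stepD t = 0 := by
  unfold stepD; rw [max_eq_left (by nlinarith)]; ring

lemma stepD_of_one_le {t : ℝ} (ht : 1 ≤ t) : stepD t = 0 := by
  unfold stepD; rw [max_eq_left (by nlinarith)]; ring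

lemma hasDerivAt_step (t : ℝ) : HasDerivAt step (stepD t) t :=
  (continuous_stepD.integral_hasStrictDerivAt 0 t).hasDerivAt

lemma monotone_step : Monotone step :=
  monotone_of_hasDerivAt_nonneg hasDerivAt_step stepD_nonneg

lemma step_of_nonpos {t : ℝ} (ht : t ≤ 0) : step t = 0 := by
  unfold step
  rw [intervalIntegral.integral_congr (g := fun _ => (0 : ℝ))]
  · simp
  · intro s hs
    rw [Set.uIcc_of_ge ht] at hs
    exact stepD_of_nonpos hs.2

lemma step_of_one_le {t : ℝ} (ht : 1 ≤ t) : step t = 1 := by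
  unfold step
  rw [← intervalIntegral.integral_add_adjacent_intervals (b := 1)
    (continuous_stepD.intervalIntegrable _ _) (continuous_stepD.intervalIntegrable _ _),
    intervalIntegral.integral_congr (a := 1) (g := fun _ => (0 : ℝ)),
    intervalIntegral.integral_congr (a := 0) (g := fun s => 6 * s ^ 1 - 6 * s ^ 2)]
  · rw [intervalIntegral.integral_sub
      (Continuous.intervalIntegrable (by fun_prop) _ _)
      (Continuous.intervalIntegrable (by fun_prop) _ _)]
    simp only [intervalIntegral.integral_const_mul, integral_pow,
      intervalIntegral.integral_zero]
    norm_num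
  · intro s hs
    rw [Set.uIcc_of_le zero_le_one] at hs
    have : 0 ≤ s * (1 - s) := mul_nonneg hs.1 (by linarith [hs.2])
    simp only [stepD]; rw [max_eq_right this]; ring
  · intro s hs
    rw [Set.uIcc_of_le ht] at hs
    exact stepD_of_one_le hs.1

lemma step_nonneg (t : ℝ) : 0 ≤ step t := by
  rcases le_total t 0 with h | h
  · rw [step_of_nonpos h]
  · rw [← step_of_nonpos le_rfl]; exact monotone_step h

lemma step_le_one (t : ℝ) : step t ≤ 1 := by
  rcases le_total t 1 with h | h
  · rw [← step_of_one_le le_rfl]; exact monotone_step h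
  · rw [step_of_one_le h]

/-- A plateau function: a `C¹` function equal to `1` on `[a, b]` and vanishing outside
`[a - ε, b + ε]`. -/
def plat (a b ε t : ℝ) : ℝ := step ((t - a + ε) / ε) * step ((b + ε - t) / ε)

/-- The derivative of `plat`. -/
def platD (a b ε t : ℝ) : ℝ :=
  stepD ((t - a + ε) / ε) / ε * step ((b + ε - t) / ε)
    - step ((t - a + ε) / ε) * (stepD ((b + ε - t) / ε) / ε)

section plat

variable {a b ε t : ℝ}

lemma hasDerivAt_plat : HasDerivAt (plat a b ε) (platD a b ε t) t := by
  have h1 : HasDerivAt (fun t : ℝ => (t - a + ε) / ε) (1 / ε) t :=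
    (((hasDerivAt_id t).sub_const a).add_const ε).div_const ε
  have h2 : HasDerivAt (fun t : ℝ => (b + ε - t) / ε) (-1 / ε) t :=
    ((hasDerivAt_id t).const_sub (b + ε)).div_const ε
  have := ((hasDerivAt_step _).comp t h1).mul ((hasDerivAt_step _).comp t h2)
  refine this.congr_deriv ?_
  simp only [platD, Function.comp_def]; ring

lemma continuous_step : Continuous step :=
  continuous_iff_continuousAt.2 fun t => (hasDerivAt_step t).continuousAt

lemma continuous_platD : Continuous (platD a b ε) := by
  unfold platD
  have := continuous_step
  have := continuous_stepD
  fun_prop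

lemma plat_nonneg : 0 ≤ plat a b ε t := mul_nonneg (step_nonneg _) (step_nonneg _)

lemma plat_le_one : plat a b ε t ≤ 1 :=
  mul_le_one₀ (step_le_one _) (step_nonneg _) (step_le_one _)

lemma plat_eq_one (hε : 0 < ε) (h1 : a ≤ t) (h2 : t ≤ b) : plat a b ε t = 1 := by
  unfold plat
  rw [step_of_one_le ((one_le_div hε).2 (by linarith)),
    step_of_one_le ((one_le_div hε).2 (by linarith)), one_mul]

lemma plat_eq_zero (hε : 0 < ε) (h : t ≤ a - ε ∨ b + ε ≤ t) : plat a b ε t = 0 := by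
  unfold plat
  rcases h with h | h
  · rw [step_of_nonpos (div_nonpos_of_nonpos_of_nonneg (by linarith) hε.le), zero_mul]
  · rw [step_of_nonpos (t := (b + ε - t) / ε)
      (div_nonpos_of_nonpos_of_nonneg (by linarith) hε.le), mul_zero]

lemma platD_eq_zero (hε : 0 < ε) (h : t ≤ a - ε ∨ b + ε ≤ t) : platD a b ε t = 0 := by
  unfold platD
  rcases h with h | h
  · have h' : (t - a + ε) / ε ≤ 0 := div_nonpos_of_nonpos_of_nonneg (by linarith) hε.le
    rw [step_of_nonpos h', stepD_of_nonpos h']; ring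
  · have h' : (b + ε - t) / ε ≤ 0 := div_nonpos_of_nonpos_of_nonneg (by linarith) hε.le
    rw [step_of_nonpos h', stepD_of_nonpos h']; ring

lemma platD_eq_zero_of_mem (hε : 0 < ε) (h1 : a ≤ t) (h2 : t ≤ b) : platD a b ε t = 0 := by
  unfold platD
  rw [stepD_of_one_le ((one_le_div hε).2 (by linarith)),
    stepD_of_one_le ((one_le_div hε).2 (by linarith))]; ring

lemma abs_platD_le (hε : 0 < ε) : |platD a b ε t| ≤ 4 / ε := by
  have key : ∀ s s' : ℝ, 0 ≤ stepD s / ε * step s' ∧ stepD s / ε * step s' ≤ 2 / ε := fun s s' =>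
    ⟨mul_nonneg (div_nonneg (stepD_nonneg _) hε.le) (step_nonneg _),
      (mul_le_of_le_one_right (div_nonneg (stepD_nonneg _) hε.le) (step_le_one _)).trans
        (div_le_div_of_nonneg_right (stepD_le _) hε.le)⟩
  have k1 := key ((t - a + ε) / ε) ((b + ε - t) / ε)
  have k2 := key ((b + ε - t) / ε) ((t - a + ε) / ε)
  have e4 : 4 / ε = 2 / ε + 2 / ε := by ring
  unfold platD
  rw [abs_le, e4]
  constructor <;> nlinarith

end plat

/-- `a : ℝ → ℝ` is `C¹` with derivative `a'` and compact support. -/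
structure Cut (a a' : ℝ → ℝ) : Prop where
  deriv : ∀ t, HasDerivAt a (a' t) t
  cont : Continuous a'
  supp : ∃ L, ∀ t, L < |t| → a t = 0

lemma cut_plat {a b ε : ℝ} (hε : 0 < ε) : Cut (plat a b ε) (platD a b ε) where
  deriv _ := hasDerivAt_plat
  cont := continuous_platD
  supp := ⟨max (-(a - ε)) (b + ε), fun t ht => plat_eq_zero hε (by
    rcases max_lt_iff.1 ht with ⟨h1, h2⟩
    rcases abs_cases t with ⟨h, _⟩ | ⟨h, _⟩
    · right; linarith
    · left; linarith)⟩

/-- A product of a `C¹` function and a cut-off is a cut-off. -/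
lemma Cut.mul_left {a a' b b' : ℝ → ℝ} (ha : Cut a a') (hb : ∀ t, HasDerivAt b (b' t) t)
    (hb' : Continuous b') : Cut (fun t => b t * a t) (fun t => b' t * a t + b t * a' t) where
  deriv t := (hb t).mul (ha.deriv t)
  cont := by
    have h1 : Continuous a := continuous_iff_continuousAt.2 fun t => (ha.deriv t).continuousAt
    have h2 : Continuous b := continuous_iff_continuousAt.2 fun t => (hb t).continuousAt
    have := ha.cont
    fun_prop
  supp := by
    obtain ⟨L, hL⟩ := ha.supp
    exact ⟨L, fun t ht => by rw [hL t ht, mul_zero]⟩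

/-- The product `a(x₀) b(x₁) d(x₂)`. -/
def tens (a b d : ℝ → ℝ) (x : Ed 3) : ℝ := a (x 0) * b (x 1) * d (x 2)

section tens

variable {a a' b b' d d' : ℝ → ℝ}

lemma hasCompactSupport_tens (ha : Cut a a') (hb : Cut b b') (hd : Cut d d') :
    HasCompactSupport (tens a b d) := by
  obtain ⟨A, hA⟩ := ha.supp
  obtain ⟨B, hB⟩ := hb.supp
  obtain ⟨D, hD⟩ := hd.supp
  refine HasCompactSupport.intro (isCompact_closedBall (0 : Ed 3) (|A| + |B| + |D|)) fun x hx => ?_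
  unfold tens
  by_contra hne
  have h0 : |x 0| ≤ A := by
    by_contra! h; exact hne (by rw [hA _ h]; ring)
  have h1 : |x 1| ≤ B := by
    by_contra! h; exact hne (by rw [hB _ h]; ring)
  have h2 : |x 2| ≤ D := by
    by_contra! h; exact hne (by rw [hD _ h]; ring)
  apply hx
  rw [mem_closedBall_zero_iff, EuclideanSpace.norm_eq, Fin.sum_univ_three]
  apply Real.sqrt_le_iff.2
  refine ⟨by positivity, ?_⟩
  simp only [Real.norm_eq_abs]
  nlinarith [abs_nonneg (x 0), abs_nonneg (x 1), abs_nonneg (x 2), le_abs_self A, le_abs_self B,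
    le_abs_self D, mul_nonneg (abs_nonneg A) (abs_nonneg B),
    mul_nonneg (abs_nonneg A) (abs_nonneg D), mul_nonneg (abs_nonneg B) (abs_nonneg D),
    pow_le_pow_left₀ (abs_nonneg _) (h0.trans (le_abs_self A)) 2,
    pow_le_pow_left₀ (abs_nonneg _) (h1.trans (le_abs_self B)) 2,
    pow_le_pow_left₀ (abs_nonneg _) (h2.trans (le_abs_self D)) 2]

lemma Cut.comp_contDiff (ha : Cut a a') (i : Fin 3) :
    ContDiff ℝ 1 fun x : Ed 3 => a (x i) := by
  have h : ContDiff ℝ 1 a := by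
    rw [contDiff_one_iff_deriv]
    refine ⟨fun t => (ha.deriv t).differentiableAt, ?_⟩
    rw [show _root_.deriv a = a' from funext fun t => (ha.deriv t).deriv]
    exact ha.cont
  exact h.comp (EuclideanSpace.proj i : Ed 3 →L[ℝ] ℝ).contDiff

lemma contDiff_tens (ha : Cut a a') (hb : Cut b b') (hd : Cut d d') :
    ContDiff ℝ 1 (tens a b d) :=
  ((ha.comp_contDiff 0).mul (hb.comp_contDiff 1)).mul (hd.comp_contDiff 2)

lemma dd_tens (ha : Cut a a') (hb : Cut b b') (hd : Cut d d') (x : Ed 3) :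
    dd 0 (tens a b d) x = a' (x 0) * b (x 1) * d (x 2) ∧
    dd 1 (tens a b d) x = a (x 0) * b' (x 1) * d (x 2) ∧
    dd 2 (tens a b d) x = a (x 0) * b (x 1) * d' (x 2) := by
  have da : DifferentiableAt ℝ (fun x : Ed 3 => a (x 0)) x :=
    (ha.comp_contDiff 0).differentiable (by simp) x
  have db : DifferentiableAt ℝ (fun x : Ed 3 => b (x 1)) x :=
    (hb.comp_contDiff 1).differentiable (by simp) x
  have ddf : DifferentiableAt ℝ (fun x : Ed 3 => d (x 2)) x :=
    (hd.comp_contDiff 2).differentiable (by simp) x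
  have key : ∀ i, dd i (tens a b d) x = _ := fun i => by
    show dd i (fun x => a (x 0) * b (x 1) * d (x 2)) x = _
    rw [dd_mul (da.fun_mul db) ddf, dd_mul da db, dd_coord (ha.deriv _), dd_coord (hb.deriv _),
      dd_coord (hd.deriv _)]
  refine ⟨?_, ?_, ?_⟩ <;> rw [key] <;> simp

end tens

/-- The volume of a box in `ℝ³`. -/
lemma volume_box (A L : ℝ) (hA : 0 ≤ A) (hL : 0 ≤ L) :
    IsClosed {x : Ed 3 | |x 0| ≤ A ∧ |x 1| ≤ L ∧ |x 2| ≤ L} ∧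
    volume {x : Ed 3 | |x 0| ≤ A ∧ |x 1| ≤ L ∧ |x 2| ≤ L} = ENNReal.ofReal (8 * A * L ^ 2) := by
  have hcl : IsClosed {x : Ed 3 | |x 0| ≤ A ∧ |x 1| ≤ L ∧ |x 2| ≤ L} := by
    have hc : ∀ (i : Fin 3) (M : ℝ), IsClosed {x : Ed 3 | |x i| ≤ M} := fun i M =>
      isClosed_le (by fun_prop) continuous_const
    exact (hc 0 A).inter ((hc 1 L).inter (hc 2 L))
  refine ⟨hcl, ?_⟩
  have hpre : {x : Ed 3 | |x 0| ≤ A ∧ |x 1| ≤ L ∧ |x 2| ≤ L}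
      = (WithLp.ofLp : Ed 3 → (Fin 3 → ℝ)) ⁻¹' Set.Icc ![-A, -L, -L] ![A, L, L] := by
    ext x
    simp only [Set.mem_ofPred_eq, Set.mem_preimage, Set.mem_Icc, Pi.le_def, Fin.forall_fin_succ,
      abs_le]
    simp
    tauto
  rw [hpre, (PiLp.volume_preserving_ofLp (Fin 3)).measure_preimage
    measurableSet_Icc.nullMeasurableSet, Real.volume_Icc_pi, Fin.prod_univ_three]
  simp only [Matrix.cons_val]
  rw [← ENNReal.ofReal_mul (by linarith), ← ENNReal.ofReal_mul (by nlinarith)]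
  congr 1; ring

/-! ### The transverse Pohozaev identity -/

lemma den_nonneg (U V : Ed 3 → ℝ) (x : Ed 3) : 0 ≤ den U V x := by
  unfold den; positivity

lemma grad_le_den (U V : Ed 3 → ℝ) (i : Fin 3) (x : Ed 3) :
    dd i U x ^ 2 + dd i V x ^ 2 ≤ 2 * den U V x := by
  have := Finset.single_le_sum (f := fun i => dd i U x ^ 2 + dd i V x ^ 2)
    (fun i _ => by positivity) (Finset.mem_univ i)
  unfold den
  nlinarith [sq_nonneg (1 - (U x ^ 2 + V x ^ 2))]

lemma abs_tau_le (U V : Ed 3 → ℝ) (i j : Fin 3) (x : Ed 3) :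
    |tau U V i j x| ≤ 2 * den U V x := by
  have h1 := grad_le_den U V i x
  have h2 := grad_le_den U V j x
  unfold tau
  rw [abs_le]
  constructor <;> nlinarith [sq_nonneg (dd i U x + dd j U x), sq_nonneg (dd i V x + dd j V x),
    sq_nonneg (dd i U x - dd j U x), sq_nonneg (dd i V x - dd j V x)]

lemma abs_mul_plat_le {R t : ℝ} (hR : 0 < R) : |t * plat (-R) R R t| ≤ 2 * R := by
  rcases le_or_gt |t| (2 * R) with h | h
  · rw [abs_mul, abs_of_nonneg plat_nonneg]
    exact (mul_le_of_le_one_right (abs_nonneg _) plat_le_one).trans h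
  · rw [plat_eq_zero hR (by
      rcases abs_cases t with ⟨h', _⟩ | ⟨h', _⟩
      · right; linarith
      · left; linarith), mul_zero, abs_zero]
    positivity

lemma abs_mul_platD_le {R t : ℝ} (hR : 0 < R) : |t * platD (-R) R R t| ≤ 8 := by
  rcases le_or_gt |t| (2 * R) with h | h
  · rw [abs_mul]
    calc |t| * |platD (-R) R R t| ≤ (2 * R) * (4 / R) :=
          mul_le_mul h (abs_platD_le hR) (abs_nonneg _) (by positivity)
      _ = 8 := by field_simp; norm_num
  · rw [platD_eq_zero hR (by
      rcases abs_cases t with ⟨h', _⟩ | ⟨h', _⟩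
      · right; linarith
      · left; linarith), mul_zero, abs_zero]
    norm_num

lemma plat_zero_of_abs {R t : ℝ} (hR : 0 < R) (h : 2 * R < |t|) : plat (-R) R R t = 0 :=
  plat_eq_zero hR (by
    rcases abs_cases t with ⟨h', _⟩ | ⟨h', _⟩
    · right; linarith
    · left; linarith)

lemma platD_zero_of_abs {R t : ℝ} (hR : 0 < R) (h : 2 * R < |t|) : platD (-R) R R t = 0 :=
  platD_eq_zero hR (by
    rcases abs_cases t with ⟨h', _⟩ | ⟨h', _⟩
    · right; linarith
    · left; linarith)

lemma cut_mul_plat {R : ℝ} (hR : 0 < R) : Cut (fun t => t * plat (-R) R R t)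
    (fun t => 1 * plat (-R) R R t + t * platD (-R) R R t) :=
  (cut_plat hR).mul_left (b := fun t => t) (b' := fun _ => 1) (fun t => hasDerivAt_id t)
    continuous_const

/-- Test functions `F ≈ xⱼ`, cut off at scale `R` in the transverse variables and at the much larger
scale `A` in the direction of propagation. -/
lemma exists_test {R A : ℝ} (hR : 1 ≤ R) (hA : R ≤ A) {j : Fin 3} (hj : j ≠ 0) :
    ∃ F : Ed 3 → ℝ, ContDiff ℝ 1 F ∧ HasCompactSupport F ∧ (∀ i x, |dd i F x| ≤ 10) ∧
      (∀ x : Ed 3, |x 0| ≤ R → |x 1| ≤ R → |x 2| ≤ R → ∀ i,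
        dd i F x = if i = j then 1 else 0) ∧
      (∀ x, |dd 0 F x| ≤ 8 * R / A) ∧
      (∀ x : Ed 3, ¬(|x 0| ≤ 2 * A ∧ |x 1| ≤ 2 * R ∧ |x 2| ≤ 2 * R) → dd 0 F x = 0) := by
  have hR0 : 0 < R := by linarith
  have hA0 : 0 < A := by linarith
  have c0 := cut_plat (a := -A) (b := A) hA0
  have c1 := cut_plat (a := -R) (b := R) hR0
  have c2 := cut_mul_plat hR0
  have p1 : ∀ (S t : ℝ), |plat (-S) S S t| ≤ 1 := fun S t => by
    rw [abs_of_nonneg plat_nonneg]; exact plat_le_one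
  have p2 : ∀ t, |t * plat (-R) R R t| ≤ 2 * R := fun t => abs_mul_plat_le hR0
  have p3 : ∀ t, |1 * plat (-R) R R t + t * platD (-R) R R t| ≤ 10 := fun t => by
    refine (abs_add_le _ _).trans ?_
    rw [one_mul]
    linarith [p1 R t, abs_mul_platD_le (t := t) hR0]
  have d1 : ∀ t, |platD (-R) R R t| ≤ 4 / R := fun t => abs_platD_le hR0
  have d0 : ∀ t, |platD (-A) A A t| ≤ 4 / A := fun t => abs_platD_le hA0
  have in1 : ∀ t, |t| ≤ R → plat (-R) R R t = 1 := fun t ht =>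
    plat_eq_one hR0 (abs_le.1 ht).1 (abs_le.1 ht).2
  have in0 : ∀ t, |t| ≤ R → plat (-A) A A t = 1 := fun t ht =>
    plat_eq_one hA0 (by linarith [(abs_le.1 ht).1]) (by linarith [(abs_le.1 ht).2])
  have in1' : ∀ t, |t| ≤ R → platD (-R) R R t = 0 := fun t ht =>
    platD_eq_zero_of_mem hR0 (abs_le.1 ht).1 (abs_le.1 ht).2
  have in0' : ∀ t, |t| ≤ R → platD (-A) A A t = 0 := fun t ht =>
    platD_eq_zero_of_mem hA0 (by linarith [(abs_le.1 ht).1]) (by linarith [(abs_le.1 ht).2])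
  have RA : 8 * R / A ≤ 8 := by rw [div_le_iff₀ hA0]; linarith
  have m3 : ∀ {p q r P Q S : ℝ}, |p| ≤ P → |q| ≤ Q → |r| ≤ S → |p * q * r| ≤ P * Q * S :=
    fun {p q r P Q S} hp hq hr => by
      rw [abs_mul, abs_mul]
      have := abs_nonneg p
      have := abs_nonneg q
      have := abs_nonneg r
      gcongr
      · exact mul_nonneg (by linarith) (by linarith)
      · linarith
  have e1 : (4 / A) * (2 * R) * 1 = 8 * R / A := by ring
  have e2 : (4 / A) * 1 * (2 * R) = 8 * R / A := by ring
  have e3 : (1 : ℝ) * (2 * R) * (4 / R) = 8 := by field_simp; norm_num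
  have e4 : (1 : ℝ) * (4 / R) * (2 * R) = 8 := by field_simp; norm_num
  have hj' : j = 1 ∨ j = 2 := by
    fin_cases j
    · exact absurd rfl hj
    · left; rfl
    · right; rfl
  rcases hj' with rfl | rfl
  · have D := fun x => dd_tens c0 c2 c1 x
    refine ⟨_, contDiff_tens c0 c2 c1, hasCompactSupport_tens c0 c2 c1, ?_, ?_, ?_, ?_⟩
    · intro i x
      obtain ⟨D0, D1, D2⟩ := D x
      fin_cases i
      · simp only [Fin.zero_eta, D0]
        linarith [m3 (d0 (x 0)) (p2 (x 1)) (p1 R (x 2))]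
      · simp only [Fin.mk_one, D1]
        linarith [m3 (p1 A (x 0)) (p3 (x 1)) (p1 R (x 2))]
      · simp only [Fin.reduceFinMk, D2]
        linarith [m3 (p1 A (x 0)) (p2 (x 1)) (d1 (x 2))]
    · intro x h0 h1 h2 i
      obtain ⟨D0, D1, D2⟩ := D x
      fin_cases i
      · simp [D0, in0' _ h0]
      · simp [D1, in0 _ h0, in1 _ h1, in1 _ h2, in1' _ h1]
      · simp [D2, in1' _ h2]
    · intro x
      rw [(D x).1, ← e1]
      exact m3 (d0 (x 0)) (p2 (x 1)) (p1 R (x 2))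
    · intro x hx
      rw [(D x).1]
      by_contra hne
      refine hx ⟨?_, ?_, ?_⟩
      · by_contra! h; exact hne (by rw [platD_zero_of_abs hA0 h]; ring)
      · by_contra! h; exact hne (by rw [plat_zero_of_abs (t := x 1) hR0 h]; ring)
      · by_contra! h; exact hne (by rw [plat_zero_of_abs (t := x 2) hR0 h]; ring)
  · have D := fun x => dd_tens c0 c1 c2 x
    refine ⟨_, contDiff_tens c0 c1 c2, hasCompactSupport_tens c0 c1 c2, ?_, ?_, ?_, ?_⟩
    · intro i x
      obtain ⟨D0, D1, D2⟩ := D x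
      fin_cases i
      · simp only [Fin.zero_eta, D0]
        linarith [m3 (d0 (x 0)) (p1 R (x 1)) (p2 (x 2))]
      · simp only [Fin.mk_one, D1]
        linarith [m3 (p1 A (x 0)) (d1 (x 1)) (p2 (x 2))]
      · simp only [Fin.reduceFinMk, D2]
        linarith [m3 (p1 A (x 0)) (p1 R (x 1)) (p3 (x 2))]
    · intro x h0 h1 h2 i
      obtain ⟨D0, D1, D2⟩ := D x
      fin_cases i
      · simp [D0, in0' _ h0]
      · simp [D1, in1' _ h1]
      · simp [D2, in0 _ h0, in1 _ h1, in1 _ h2, in1' _ h2]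
    · intro x
      rw [(D x).1, ← e2]
      exact m3 (d0 (x 0)) (p1 R (x 1)) (p2 (x 2))
    · intro x hx
      rw [(D x).1]
      by_contra hne
      refine hx ⟨?_, ?_, ?_⟩
      · by_contra! h; exact hne (by rw [platD_zero_of_abs hA0 h]; ring)
      · by_contra! h; exact hne (by rw [plat_zero_of_abs (t := x 1) hR0 h]; ring)
      · by_contra! h; exact hne (by rw [plat_zero_of_abs (t := x 2) hR0 h]; ring)

namespace RealSol

variable {c : ℝ} {U V : Ed 3 → ℝ}

lemma integrable_grad (h : RealSol c U V) (hE : Integrable (den U V)) (i : Fin 3) :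
    Integrable fun x => dd i U x ^ 2 + dd i V x ^ 2 := by
  refine (hE.const_mul 2).mono'
    (((contDiff_dd h.smU).continuous.pow 2).add
      ((contDiff_dd h.smV).continuous.pow 2)).aestronglyMeasurable
    (Eventually.of_forall fun x => ?_)
  rw [Real.norm_of_nonneg (by positivity)]
  exact grad_le_den U V i x

/-- The transverse Pohozaev identity: testing momentum conservation in a direction `j` orthogonal to
the propagation against `xⱼ` shows that `∫ |∂ⱼψ|²` is the Lagrangian. -/
lemma pohozaev (h : RealSol c U V) (hE : Integrable (den U V)) (hM : ∀ x, |U x| ≤ 2)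
    {j : Fin 3} (hj : j ≠ 0) (hI : Integrable fun x => (U x - 1) * dd 0 V x) :
    ∫ x, (dd j U x ^ 2 + dd j V x ^ 2) = ∫ x, (den U V x + c * ((U x - 1) * dd 0 V x)) := by
  set α : Ed 3 → ℝ := fun x => (U x - 1) * dd j V x with hα
  set γ : Ed 3 → ℝ := fun x => (U x - 1) * dd 0 V x with hγ
  have hR : ∀ n : ℕ, (1 : ℝ) ≤ n + 1 := fun n => by linarith [Nat.cast_nonneg (α := ℝ) n]
  -- the longitudinal scale `R⁶` makes the error term involving `α` of size `1 / R`
  have hA : ∀ n : ℕ, (n + 1 : ℝ) ≤ (n + 1 : ℝ) ^ 6 := fun n => le_self_pow₀ (hR n) (by norm_num)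
  choose F hF hFc hb hin h0 hout using fun n : ℕ => exists_test (hR n) (hA n) hj
  have hu : ContDiff ℝ (⊤ : ℕ∞) fun x => U x - 1 := h.smU.sub contDiff_const
  have hfl := fun n => h.integral_flux j (α := α) (γ := γ) (hF n) (hFc n)
    (fun x _ => ((hu.mul (contDiff_dd h.smV)).of_le (by simp)).contDiffAt)
    (fun x _ => ((hu.mul (contDiff_dd h.smV)).of_le (by simp)).contDiffAt)
    (fun x _ => h.curl_global j x)
  set G : ℕ → Ed 3 → ℝ := fun n x =>
    ∑ i, tau U V i j x * dd i (F n) x - (den U V x + c * γ x) * dd j (F n) x with hG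
  have hden : Continuous (den U V) := h.contDiff_den.continuous
  have hγc : Continuous γ := (hu.mul (contDiff_dd h.smV)).continuous
  have hEγ : Integrable fun x => den U V x + c * γ x := hE.add (hI.const_mul c)
  have lim1 : Tendsto (fun n => ∫ x, G n x) atTop
      (𝓝 (∫ x, (tau U V j j x - (den U V x + c * γ x)))) := by
    refine tendsto_integral_of_dominated_convergence
      (fun x => 60 * den U V x + 10 * |den U V x + c * γ x|) (fun n => ?_)
      ((hE.const_mul 60).add (hEγ.abs.const_mul 10)) (fun n => ?_) ?_
    · have hd : ∀ i, Continuous (dd i (F n)) := fun i =>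
        ((hF n).continuous_fderiv (by simp)).clm_apply continuous_const
      have ht := fun i => (h.contDiff_tau i j).continuous
      refine Continuous.aestronglyMeasurable ?_
      simp only [hG, Fin.sum_univ_three]
      fun_prop
    · refine Eventually.of_forall fun x => ?_
      have k : ∀ i, |tau U V i j x * dd i (F n) x| ≤ 2 * den U V x * 10 := fun i => by
        rw [abs_mul]
        exact mul_le_mul (abs_tau_le U V i j x) (hb n i x) (abs_nonneg _)
          (by linarith [den_nonneg U V x])
      have k3 : |(den U V x + c * γ x) * dd j (F n) x| ≤ |den U V x + c * γ x| * 10 := by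
        rw [abs_mul]; exact mul_le_mul_of_nonneg_left (hb n j x) (abs_nonneg _)
      simp only [hG, Fin.sum_univ_three, Real.norm_eq_abs]
      refine (abs_sub _ _).trans ?_
      have := abs_add_three (tau U V 0 j x * dd 0 (F n) x) (tau U V 1 j x * dd 1 (F n) x)
        (tau U V 2 j x * dd 2 (F n) x)
      linarith [k 0, k 1, k 2]
    · refine Eventually.of_forall fun x => tendsto_const_nhds.congr' ?_
      obtain ⟨N, hN⟩ := exists_nat_ge ‖x‖
      filter_upwards [eventually_ge_atTop N] with n hn
      have hx : ∀ i, |x i| ≤ (n : ℝ) + 1 := fun i => by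
        have : |x i| ≤ ‖x‖ := PiLp.norm_apply_le x i
        have : (N : ℝ) ≤ n := by exact_mod_cast hn
        linarith
      simp only [hG, hin n x (hx 0) (hx 1) (hx 2)]
      simp
  have lim2 : Tendsto (fun n => ∫ x, G n x) atTop (𝓝 0) := by
    have e : ∀ n, ∫ x, G n x = -(c * ∫ x, α x * dd 0 (F n) x) := by
      intro n
      obtain ⟨f1, f2, f3⟩ := hfl n
      have : ∀ x, G n x = flux c U V j α γ (F n) x - c * (α x * dd 0 (F n) x) := fun x => by
        simp only [hG, flux]; ring
      rw [integral_congr_ae (Eventually.of_forall this), integral_sub f1 (f2.const_mul c), f3,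
        integral_const_mul]
      ring
    have bd : ∀ n : ℕ, ‖∫ x, α x * dd 0 (F n) x‖ ≤
        (2 * (∫ x, den U V x) + 9216) * (1 / ((n : ℝ) + 1)) := by
      intro n
      set R : ℝ := (n : ℝ) + 1 with hRd
      have hR0 : 0 < R := by linarith [hR n]
      obtain ⟨bc, bv⟩ := volume_box (2 * R ^ 6) (2 * R) (by positivity) (by positivity)
      set B := {x : Ed 3 | |x 0| ≤ 2 * R ^ 6 ∧ |x 1| ≤ 2 * R ∧ |x 2| ≤ 2 * R} with hB
      have hBi : Integrable (B.indicator fun _ => 144 * R ^ 3 / R ^ 12) := by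
        rw [integrable_indicator_iff bc.measurableSet]
        exact integrableOn_const (by rw [bv]; exact ENNReal.ofReal_ne_top)
      have hbi : ∫ x, (2 / R * den U V x + B.indicator (fun _ => 144 * R ^ 3 / R ^ 12) x)
          = (2 * (∫ x, den U V x) + 9216) * (1 / R) := by
        rw [integral_add (hE.const_mul _) hBi, integral_const_mul,
          integral_indicator_const _ bc.measurableSet, measureReal_def, bv,
          ENNReal.toReal_ofReal (by positivity)]
        simp only [smul_eq_mul]
        field_simp
        ring
      rw [← hbi]
      refine norm_integral_le_of_norm_le ((hE.const_mul _).add hBi)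
        (Eventually.of_forall fun x => ?_)
      have hd := grad_le_den U V j x
      have hd0 := den_nonneg U V x
      by_cases hx : x ∈ B
      · rw [Set.indicator_of_mem hx, Real.norm_eq_abs, abs_mul]
        have hu3 : |U x - 1| ≤ 3 := by
          rw [abs_le]; constructor <;> linarith [(abs_le.1 (hM x)).1, (abs_le.1 (hM x)).2]
        have ha : |α x| ≤ 3 * |dd j V x| := by
          rw [hα, abs_mul]; exact mul_le_mul_of_nonneg_right hu3 (abs_nonneg _)
        have hs : |dd 0 (F n) x| ≤ 8 * R / R ^ 6 := h0 n x
        have hV : |dd j V x| ^ 2 ≤ 2 * den U V x := by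
          rw [sq_abs]; nlinarith [sq_nonneg (dd j U x)]
        set s := 8 * R / R ^ 6 with hsd
        have hs' : 144 * R ^ 3 / R ^ 12 = 9 / 4 * R * s ^ 2 := by
          rw [hsd]; field_simp; norm_num
        have h1 : |α x| * |dd 0 (F n) x| ≤ 3 * |dd j V x| * s :=
          mul_le_mul ha hs (abs_nonneg _) (by positivity)
        have h2 : 3 * |dd j V x| * s ≤ |dd j V x| ^ 2 / R + 9 / 4 * R * s ^ 2 := by
          have : 0 ≤ (|dd j V x| - 3 / 2 * R * s) ^ 2 / R := by positivity
          have e : (|dd j V x| - 3 / 2 * R * s) ^ 2 / R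
            = |dd j V x| ^ 2 / R + 9 / 4 * R * s ^ 2 - 3 * |dd j V x| * s := by
            field_simp; ring
          linarith
        have h3 : |dd j V x| ^ 2 / R ≤ 2 / R * den U V x := by
          rw [div_mul_eq_mul_div]; exact div_le_div_of_nonneg_right hV hR0.le
        rw [hs']; linarith
      · rw [Set.indicator_of_notMem hx, hout n x hx, mul_zero, norm_zero, add_zero]
        positivity
    have z : Tendsto (fun n => ∫ x, α x * dd 0 (F n) x) atTop (𝓝 0) := by
      refine squeeze_zero_norm bd ?_
      simpa using (tendsto_one_div_add_atTop_nhds_zero_nat (𝕜 := ℝ)).const_mul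
        (2 * (∫ x, den U V x) + 9216)
    rw [funext e]
    simpa using (z.const_mul c).neg
  have := tendsto_nhds_unique lim1 lim2
  have hτ : ∀ x, tau U V j j x = dd j U x ^ 2 + dd j V x ^ 2 := fun x => by unfold tau; ring
  simp only [hτ] at this
  rw [integral_sub (h.integrable_grad hE j) hEγ] at this
  linarith

end RealSol

/-! ### A quantum of transverse energy in every strip meeting the sublevel set -/

/-- The real part of `ψ`. -/
def reP (ψ : Ed 3 → ℂ) (x : Ed 3) : ℝ := (ψ x).re

/-- The imaginary part of `ψ`. -/
def imP (ψ : Ed 3 → ℂ) (x : Ed 3) : ℝ := (ψ x).im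

lemma norm_sq_eq (ψ : Ed 3 → ℂ) (x : Ed 3) : ‖ψ x‖ ^ 2 = reP ψ x ^ 2 + imP ψ x ^ 2 := by
  rw [← Complex.normSq_eq_norm_sq, Complex.normSq_apply, reP, imP]; ring

/-- `|∂ᵢψ|²`. -/
def grd (ψ : Ed 3 → ℂ) (i : Fin 3) (x : Ed 3) : ℝ :=
  dd i (reP ψ) x ^ 2 + dd i (imP ψ) x ^ 2

/-- The energy density after completing the square in the momentum: it is bounded below by a
potential which is nonnegative as long as `|ψ| ≥ c / √2`. -/
lemma den_add_phaseMom_ge {c : ℝ} {U V : Ed 3 → ℝ} {x : Ed 3} (hw : 0 < U x ^ 2 + V x ^ 2) :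
    1 / 4 * (1 - (U x ^ 2 + V x ^ 2)) ^ 2 * (1 - c ^ 2 / 2 / (U x ^ 2 + V x ^ 2))
      ≤ den U V x + c * phaseMom U V 0 x := by
  set w := U x ^ 2 + V x ^ 2 with hwd
  set N := U x * dd 0 V x - V x * dd 0 U x with hN
  have hg : N ^ 2 / w ≤ dd 0 U x ^ 2 + dd 0 V x ^ 2 := by
    rw [div_le_iff₀ hw, hwd, hN]
    nlinarith [sq_nonneg (U x * dd 0 U x + V x * dd 0 V x)]
  have hd : 1 / 2 * (N ^ 2 / w) + 1 / 4 * (1 - w) ^ 2 ≤ den U V x := by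
    unfold den
    rw [Fin.sum_univ_three, ← hwd]
    nlinarith [sq_nonneg (dd 1 U x), sq_nonneg (dd 1 V x), sq_nonneg (dd 2 U x),
      sq_nonneg (dd 2 V x)]
  have hp : phaseMom U V 0 x = 1 / 2 * N * (w - 1) / w := by
    unfold phaseMom; rw [← hwd, ← hN]; field_simp
  have hs : 0 ≤ (N + c * (w - 1) / 2) ^ 2 / (2 * w) := by positivity
  have e : 1 / 2 * (N ^ 2 / w) + 1 / 4 * (1 - w) ^ 2 + c * (1 / 2 * N * (w - 1) / w)
      = 1 / 4 * (1 - w) ^ 2 * (1 - c ^ 2 / 2 / w) + (N + c * (w - 1) / 2) ^ 2 / (2 * w) := by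
    field_simp; ring
  rw [hp]; linarith

lemma abs_phaseMom_le {U V : Ed 3 → ℝ} {x : Ed 3} {κ : ℝ} (hκ : 0 < κ) (i : Fin 3)
    (hw : κ ^ 2 ≤ U x ^ 2 + V x ^ 2) :
    |phaseMom U V i x| ≤ (1 / 2 + 1 / κ ^ 2) * den U V x := by
  have hw0 : 0 < U x ^ 2 + V x ^ 2 := lt_of_lt_of_le (by positivity) hw
  have hgd := grad_le_den U V i x
  have hpd : 1 / 4 * (1 - (U x ^ 2 + V x ^ 2)) ^ 2 ≤ den U V x := by
    unfold den
    have : 0 ≤ ∑ i, (dd i U x ^ 2 + dd i V x ^ 2) := by positivity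
    linarith
  set w := U x ^ 2 + V x ^ 2 with hwd
  set N := U x * dd i V x - V x * dd i U x with hN
  have hg : N ^ 2 / w ≤ dd i U x ^ 2 + dd i V x ^ 2 := by
    rw [div_le_iff₀ hw0, hwd, hN]
    nlinarith [sq_nonneg (U x * dd i U x + V x * dd i V x)]
  have hp : phaseMom U V i x = 1 / 2 * (N * (w - 1)) / w := by
    unfold phaseMom; rw [← hwd, ← hN]; field_simp
  have h2 : (1 - w) ^ 2 / w ≤ 4 * den U V x / κ ^ 2 :=
    div_le_div₀ (by linarith [den_nonneg U V x]) (by linarith) (by positivity) hw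
  have h3 : |phaseMom U V i x| ≤ 1 / 4 * (N ^ 2 / w) + 1 / 4 * ((1 - w) ^ 2 / w) := by
    rw [hp, abs_div, abs_of_pos hw0, ← mul_div_assoc, ← mul_div_assoc, ← add_div]
    apply div_le_div_of_nonneg_right _ hw0.le
    rw [abs_le]
    constructor <;> nlinarith [sq_nonneg (N + (w - 1)), sq_nonneg (N - (w - 1))]
  have e : (1 / 2 + 1 / κ ^ 2) * den U V x
      = 1 / 4 * (2 * den U V x) + 1 / 4 * (4 * den U V x / κ ^ 2) := by ring
  rw [e]; linarith

lemma abs_tau_le_trans (ψ : Ed 3 → ℂ) (i j : Fin 3) (x : Ed 3) :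
    |tau (reP ψ) (imP ψ) i j x| ≤ 1 / 2 * (grd ψ i x + grd ψ j x) := by
  unfold tau grd
  rw [abs_le]
  constructor <;>
    nlinarith [sq_nonneg (dd i (reP ψ) x + dd j (reP ψ) x),
      sq_nonneg (dd i (imP ψ) x + dd j (imP ψ) x), sq_nonneg (dd i (reP ψ) x - dd j (reP ψ) x),
      sq_nonneg (dd i (imP ψ) x - dd j (imP ψ) x)]

lemma exists_bound_of_tendsto {ψ : Ed 3 → ℂ} (hlim : Tendsto ψ (cocompact (Ed 3)) (𝓝 1))
    {κ : ℝ} (hκ : κ < 1) : ∃ L, ∀ x, ‖ψ x‖ ≤ κ → ‖x‖ ≤ L := by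
  have h1 : Tendsto (fun x => ‖ψ x‖) (cocompact (Ed 3)) (𝓝 1) := by simpa using hlim.norm
  have h2 := h1.eventually_const_lt hκ
  rw [Metric.cobounded_eq_cocompact.symm, ← comap_norm_atTop, eventually_comap] at h2
  obtain ⟨L, hL⟩ := eventually_atTop.1 h2
  refine ⟨L, fun x hx => ?_⟩
  by_contra! h
  exact absurd (hL _ h.le x rfl) (not_lt.2 hx)

/-- `|ψ|` takes every value between `|ψ(y)|` and `1` on the line through `y` in the direction of
propagation. -/
lemma exists_level {ψ : Ed 3 → ℂ} (hψ : Continuous ψ)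
    (hlim : Tendsto ψ (cocompact (Ed 3)) (𝓝 1)) {μ : ℝ} (hμ : μ < 1) {y : Ed 3}
    (hy : ‖ψ y‖ ≤ μ) : ∃ z : Ed 3, ‖ψ z‖ = μ ∧ z 1 = y 1 ∧ z 2 = y 2 := by
  obtain ⟨L, hL⟩ := exists_bound_of_tendsto hlim hμ
  set e : Ed 3 := EuclideanSpace.single 0 1
  have he : ‖e‖ = 1 := by simp [e]
  have hT : μ ≤ ‖ψ (y + (L + 1 + ‖y‖) • e)‖ := by
    by_contra! h
    have h1 := hL _ h.le
    have h2 : ‖(L + 1 + ‖y‖) • e‖ = |L + 1 + ‖y‖| := by rw [norm_smul, he, mul_one, Real.norm_eq_abs]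
    have h3 := norm_le_add_norm_add ((L + 1 + ‖y‖) • e) y
    rw [add_comm ((L + 1 + ‖y‖) • e) y, h2] at h3
    linarith [le_abs_self (L + 1 + ‖y‖)]
  have hc : Continuous fun t : ℝ => ‖ψ (y + t • e)‖ := by fun_prop
  have hmem : μ ∈ Set.uIcc ‖ψ (y + (0 : ℝ) • e)‖ ‖ψ (y + (L + 1 + ‖y‖) • e)‖ := by
    rw [Set.mem_uIcc]; left; exact ⟨by simpa using hy, hT⟩
  obtain ⟨t, -, ht⟩ := intermediate_value_uIcc (a := (0 : ℝ)) (b := L + 1 + ‖y‖)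
    hc.continuousOn hmem
  refine ⟨y + t • e, ht, ?_, ?_⟩ <;> simp [e]

/-- The lower bound for the potential where `a = |ψ|` keeps a distance `d` from `s` and `1`. -/
lemma potential_ge {s κ d a : ℝ} (hκ : 0 < κ) (hs : κ ≤ s) (hd : 0 < d) (h1 : s + d ≤ a)
    (h2 : a ≤ 1 - d) : d ^ 3 / 4 ≤ 1 / 4 * (1 - a ^ 2) ^ 2 * (1 - κ ^ 2 / a ^ 2) := by
  have ha : 0 < a := by linarith
  have k1 : d ≤ 1 - a ^ 2 := by nlinarith
  have k2 : d ≤ 1 - κ ^ 2 / a ^ 2 := by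
    have : κ ^ 2 / a ^ 2 ≤ 1 - d := by
      rw [div_le_iff₀ (by positivity)]
      nlinarith [mul_nonneg hd.le ha.le, mul_self_nonneg κ]
    linarith
  have k3 : d ^ 2 ≤ (1 - a ^ 2) ^ 2 := pow_le_pow_left₀ hd.le k1 2
  have k4 : d ^ 2 * d ≤ (1 - a ^ 2) ^ 2 * (1 - κ ^ 2 / a ^ 2) :=
    mul_le_mul k3 k2 hd.le (by positivity)
  calc d ^ 3 / 4 = 1 / 4 * (d ^ 2 * d) := by ring
    _ ≤ 1 / 4 * ((1 - a ^ 2) ^ 2 * (1 - κ ^ 2 / a ^ 2)) := by linarith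
    _ = _ := by ring

/-- A ball inside the half-slab below `y` on which `|ψ|` stays in the intermediate range. Its centre
is `z` shifted down by `η / 2`, and sideways by `η / 4` into the strip. -/
lemma exists_ball {ψ : Ed 3 → ℂ} {s d η k : ℝ} (hη : 0 < η) (hη1 : η ≤ 1)
    (hd : d = (1 - s) / 4) (hηd : 36 * η = d)
    (lip : ∀ x y, ‖ψ x - ψ y‖ ≤ 36 * ‖x - y‖) {y : Ed 3} {z : Ed 3} (hz : ‖ψ z‖ = (1 + s) / 2)
    (hz1 : z 1 = y 1) (hz2 : z 2 = y 2) (hy1 : k - η / 8 ≤ y 1) (hy2 : y 1 ≤ k + 1 + η / 8) :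
    ∃ p : Ed 3, ∀ x ∈ closedBall p (η / 8), k ≤ x 1 ∧ x 1 ≤ k + 1 ∧ 3 / 8 * η ≤ y 2 - x 2 ∧
      y 2 - x 2 ≤ 5 / 8 * η ∧ s + d ≤ ‖ψ x‖ ∧ ‖ψ x‖ ≤ 1 - d := by
  obtain ⟨a, ha, ha1, ha2⟩ : ∃ a : ℝ, |a| = η / 4 ∧ k + η / 8 ≤ y 1 + a ∧
      y 1 + a ≤ k + 1 - η / 8 := by
    rcases le_total (y 1) (k + 1 / 2) with h | h
    · exact ⟨η / 4, abs_of_pos (by linarith), by linarith, by linarith⟩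
    · exact ⟨-(η / 4), by rw [abs_neg, abs_of_pos (by linarith)], by linarith, by linarith⟩
  set v : Ed 3 := !₂[0, a, -(η / 2)] with hv
  have hvn : ‖v‖ ≤ 3 / 4 * η := by
    rw [hv, EuclideanSpace.norm_eq, Fin.sum_univ_three]
    apply Real.sqrt_le_iff.2
    refine ⟨by positivity, ?_⟩
    simp [ha, abs_of_pos hη]
    nlinarith
  refine ⟨z + v, fun x hx => ?_⟩
  have hxd : ‖x - (z + v)‖ ≤ η / 8 := by rw [← dist_eq_norm]; exact hx
  have hxi : ∀ i, |x i - (z i + v i)| ≤ η / 8 := fun i =>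
    (PiLp.norm_apply_le (x - (z + v)) i).trans hxd
  have h1 := hxi 1
  have h2 := hxi 2
  simp only [hv, hz1, hz2, abs_le] at h1 h2
  simp at h1 h2
  have hxz : ‖x - z‖ ≤ η := by
    have : x - z = (x - (z + v)) + v := by abel
    rw [this]
    exact (norm_add_le _ _).trans (by linarith)
  have hl : |‖ψ x‖ - ‖ψ z‖| ≤ d :=
    (abs_norm_sub_norm_le _ _).trans ((lip x z).trans (by linarith))
  rw [hz, abs_le] at hl
  refine ⟨?_, ?_, ?_, ?_, ?_, ?_⟩ <;> linarith [hl.1, hl.2, h1.1, h1.2, h2.1, h2.2]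

/-- The pointwise estimate behind the strip lemma. Here `m` and `n` are the main part and the
error in `-∂₂F`. -/
lemma flux_pointwise {c : ℝ} {ψ : Ed 3 → ℂ} {F : Ed 3 → ℝ} {x : Ed 3} {κ R ε m n : ℝ}
    (hc : 0 < c) (hκ : 0 < κ) (hR : 0 < R) (hρ : κ ≤ ‖ψ x‖)
    (h0 : |dd 0 F x| ≤ 4 / R) (h1 : |dd 1 F x| ≤ 4 / ε) (h2 : dd 2 F x = -m + n)
    (hm : m ≤ 2) (hn : |n| ≤ 4 / R) :
    (den (reP ψ) (imP ψ) x + c * phaseMom (reP ψ) (imP ψ) 0 x) * m ≤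
      flux c (reP ψ) (imP ψ) 2 (phaseMom (reP ψ) (imP ψ) 2) (phaseMom (reP ψ) (imP ψ) 0) F x
      + (4 / ε + 2) * (grd ψ 1 x + grd ψ 2 x)
      + 4 / R * (5 + 2 * c * (1 / 2 + 1 / κ ^ 2)) * den (reP ψ) (imP ψ) x := by
  set e := den (reP ψ) (imP ψ) x with he
  have he0 : 0 ≤ e := den_nonneg _ _ x
  have hw : κ ^ 2 ≤ reP ψ x ^ 2 + imP ψ x ^ 2 := by
    rw [← norm_sq_eq]; exact pow_le_pow_left₀ hκ.le hρ 2
  have q0 := abs_phaseMom_le hκ 0 hw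
  have q2 := abs_phaseMom_le hκ 2 hw
  set K := 1 / 2 + 1 / κ ^ 2 with hK
  rw [← he] at q0 q2
  have t0 := abs_tau_le (reP ψ) (imP ψ) 0 2 x
  have t1 := abs_tau_le_trans ψ 1 2 x
  have t2 := abs_tau_le (reP ψ) (imP ψ) 2 2 x
  have t2' : tau (reP ψ) (imP ψ) 2 2 x = grd ψ 2 x := by unfold tau grd; ring
  have g1 : 0 ≤ grd ψ 1 x := by unfold grd; positivity
  have g2 : 0 ≤ grd ψ 2 x := by unfold grd; positivity
  rw [← he] at t0 t2
  have hR4 : 0 ≤ 4 / R := by positivity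
  have hε4 : 0 ≤ 4 / ε := (abs_nonneg _).trans h1
  have b1 : |tau (reP ψ) (imP ψ) 0 2 x * dd 0 F x| ≤ 2 * e * (4 / R) := by
    rw [abs_mul]; exact mul_le_mul t0 h0 (abs_nonneg _) (by linarith)
  have b2 : |tau (reP ψ) (imP ψ) 1 2 x * dd 1 F x| ≤
      1 / 2 * (grd ψ 1 x + grd ψ 2 x) * (4 / ε) := by
    rw [abs_mul]; exact mul_le_mul t1 h1 (abs_nonneg _) (by linarith)
  have b3 : |tau (reP ψ) (imP ψ) 2 2 x * n| ≤ 2 * e * (4 / R) := by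
    rw [abs_mul]; exact mul_le_mul t2 hn (abs_nonneg _) (by linarith)
  have b4 : |e * n| ≤ e * (4 / R) := by
    rw [abs_mul, abs_of_nonneg he0]; exact mul_le_mul_of_nonneg_left hn he0
  have b5 : |phaseMom (reP ψ) (imP ψ) 0 x * n| ≤ K * e * (4 / R) := by
    rw [abs_mul]; exact mul_le_mul q0 hn (abs_nonneg _) ((abs_nonneg _).trans q0)
  have b6 : |phaseMom (reP ψ) (imP ψ) 2 x * dd 0 F x| ≤ K * e * (4 / R) := by
    rw [abs_mul]; exact mul_le_mul q2 h0 (abs_nonneg _) ((abs_nonneg _).trans q2)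
  have b5' := mul_le_mul_of_nonneg_left (neg_le_of_abs_le b5) hc.le
  have b5'' := mul_le_mul_of_nonneg_left (le_of_abs_le b5) hc.le
  have b6' := mul_le_mul_of_nonneg_left (neg_le_of_abs_le b6) hc.le
  have b7 : grd ψ 2 x * m ≤ grd ψ 2 x * 2 := mul_le_mul_of_nonneg_left hm g2
  have b8 : 0 ≤ (grd ψ 1 x + grd ψ 2 x) * (4 / ε) := mul_nonneg (by linarith) hε4
  have hfl : flux c (reP ψ) (imP ψ) 2 (phaseMom (reP ψ) (imP ψ) 2)
      (phaseMom (reP ψ) (imP ψ) 0) F x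
      = tau (reP ψ) (imP ψ) 0 2 x * dd 0 F x + tau (reP ψ) (imP ψ) 1 2 x * dd 1 F x
        - grd ψ 2 x * m + tau (reP ψ) (imP ψ) 2 2 x * n
        + (e + c * phaseMom (reP ψ) (imP ψ) 0 x) * m - e * n
        - c * (phaseMom (reP ψ) (imP ψ) 0 x * n)
        + c * (phaseMom (reP ψ) (imP ψ) 2 x * dd 0 F x) := by
    unfold flux
    rw [Fin.sum_univ_three, h2, ← he, t2']; ring
  rw [hfl]
  linarith [neg_le_of_abs_le b1, neg_le_of_abs_le b2, neg_le_of_abs_le b3, le_of_abs_le b4]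

set_option maxHeartbeats 1600000 in
/-- A strip `k ≤ x₁ ≤ k + 1` meeting `{|ψ| ≤ c / √2}` carries a definite amount of transverse
energy. The flux identity in direction `2` is applied in the half-slab below the lowest point
of the sublevel set: there the flux density dominates a nonnegative potential, which is
definitely positive near a point where `|ψ|` is intermediate. -/
lemma strip (s : ℝ) (hs0 : 0 < s) (hs1 : s < 1) : ∃ δ > 0, ∀ (c κ : ℝ) (ψ : Ed 3 → ℂ), 0 < c →
    0 < κ → κ ≤ s → c ^ 2 = 2 * κ ^ 2 → RealSol c (reP ψ) (imP ψ) →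
    Integrable (den (reP ψ) (imP ψ)) → Continuous ψ →
    (∀ x y, ‖ψ x - ψ y‖ ≤ 36 * ‖x - y‖) → Tendsto ψ (cocompact (Ed 3)) (𝓝 1) →
    ∀ k : ℝ, (∃ x, ‖ψ x‖ ≤ κ ∧ k ≤ x 1 ∧ x 1 ≤ k + 1) →
      δ ≤ ∫ x in {x : Ed 3 | k - 1 ≤ x 1 ∧ x 1 ≤ k + 2}, (grd ψ 1 x + grd ψ 2 x) := by
  set d : ℝ := (1 - s) / 4 with hd
  set η : ℝ := d / 36 with hη
  set ε : ℝ := η / 8 with hε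
  have hd0 : 0 < d := by rw [hd]; linarith
  have hd1 : d < 1 := by rw [hd]; linarith
  have hη0 : 0 < η := by positivity
  have hη1 : η ≤ 1 := by rw [hη]; linarith
  have hε0 : 0 < ε := by positivity
  set vol : ℝ := volume.real (closedBall (0 : Ed 3) ε) with hvol
  have hvol0 : 0 < vol :=
    ENNReal.toReal_pos (measure_closedBall_pos volume _ hε0).ne' measure_closedBall_lt_top.ne
  set l : ℝ := d ^ 3 / 4 * (η / 2) * vol with hl
  have hl0 : 0 < l := by positivity
  refine ⟨l / 2 / (4 / ε + 2), by positivity, ?_⟩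
  intro c κ ψ hc hκ hκs hcκ h hE hψ lip hlim k ⟨x₁, hx₁, hx₁k, hx₁k'⟩
  set U := reP ψ with hU
  set V := imP ψ with hV
  set S : Set (Ed 3) := {x : Ed 3 | k - 1 ≤ x 1 ∧ x 1 ≤ k + 2} with hS
  have hslab : ∀ a b : ℝ, IsClosed {x : Ed 3 | a ≤ x 1 ∧ x 1 ≤ b} := fun a b =>
    (isClosed_le (f := fun _ => a) (g := fun x : Ed 3 => x 1) continuous_const
      (by fun_prop)).inter
    (isClosed_le (f := fun x : Ed 3 => x 1) (g := fun _ => b) (by fun_prop) continuous_const)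
  have hSm : MeasurableSet S := by
    exact (hslab (k - 1) (k + 2)).measurableSet
  have hT : Integrable fun x => grd ψ 1 x + grd ψ 2 x :=
    (h.integrable_grad hE 1).add (h.integrable_grad hE 2)
  -- the lowest point of the sublevel set in the slab
  set Z : Set (Ed 3) := {x | ‖ψ x‖ ≤ κ ∧ k - ε ≤ x 1 ∧ x 1 ≤ k + 1 + ε} with hZ
  have hZc : IsCompact Z := by
    obtain ⟨L, hL⟩ := exists_bound_of_tendsto hlim (hκs.trans_lt hs1)
    refine (isCompact_closedBall (0 : Ed 3) L).of_isClosed_subset ?_ fun x hx => by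
      simpa using hL x hx.1
    exact (isClosed_le hψ.norm continuous_const).inter
      (hslab _ _)
  obtain ⟨y, hyZ, hymin⟩ := hZc.exists_isMinOn (f := fun x : Ed 3 => x 2)
    ⟨x₁, hx₁, by linarith, by linarith⟩ (by fun_prop)
  have hbelow : ∀ x : Ed 3, k - ε ≤ x 1 → x 1 ≤ k + 1 + ε → x 2 < y 2 → κ < ‖ψ x‖ := by
    intro x h1 h2 h3
    by_contra! h4
    have : y 2 ≤ x 2 := hymin (show x ∈ Z from ⟨h4, h1, h2⟩)
    linarith
  obtain ⟨z, hz, hz1, hz2⟩ := exists_level hψ hlim (show (1 + s) / 2 < 1 by linarith)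
    (show ‖ψ y‖ ≤ (1 + s) / 2 by linarith [hyZ.1])
  obtain ⟨p, hp⟩ := exists_ball hη0 hη1 hd (by rw [hη]; ring) lip hz hz1 hz2 hyZ.2.1 hyZ.2.2
  -- the longitudinal and vertical cut-off scale
  set M : ℝ := 4 * (5 + 2 * c * (1 / 2 + 1 / κ ^ 2)) * ∫ x, den U V x with hM
  have hM0 : 0 ≤ M := by
    have : 0 ≤ ∫ x, den U V x := integral_nonneg (den_nonneg U V)
    positivity
  obtain ⟨R, hR1, hR2⟩ : ∃ R : ℝ, ‖p‖ + 1 ≤ R ∧ M / R ≤ l / 2 := by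
    refine ⟨max (‖p‖ + 1) (M / (l / 2)), le_max_left _ _, ?_⟩
    have : 0 < max (‖p‖ + 1) (M / (l / 2)) := lt_max_of_lt_left (by positivity)
    rw [div_le_iff₀ this]
    calc M = l / 2 * (M / (l / 2)) := by field_simp
      _ ≤ _ := by gcongr; exact le_max_right _ _
  have hR0 : 0 < R := by linarith [norm_nonneg p]
  have cR := cut_plat (a := -R) (b := R) hR0
  have cg := cut_plat (a := k) (b := k + 1) hε0
  have ch : Cut (fun t => step (y 2 - t) * plat (-R) R R t)
      (fun t => (-stepD (y 2 - t)) * plat (-R) R R t + step (y 2 - t) * platD (-R) R R t) := by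
    refine cR.mul_left (b := fun t => step (y 2 - t)) (b' := fun t => -stepD (y 2 - t))
      (fun t => ?_) ?_
    · have := (hasDerivAt_step (y 2 - t)).comp t ((hasDerivAt_id t).const_sub (y 2))
      simpa [Function.comp_def] using this
    · exact (continuous_stepD.comp (continuous_const.sub continuous_id)).neg
  set F := tens (plat (-R) R R) (plat k (k + 1) ε)
    (fun t => step (y 2 - t) * plat (-R) R R t) with hF
  have D := fun x => dd_tens cR cg ch x
  rw [← hF] at D
  -- outside the open half-slab everything vanishes
  have hout : ∀ x : Ed 3, ¬(k - ε < x 1 ∧ x 1 < k + 1 + ε ∧ x 2 < y 2) →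
      F x = 0 ∧ ∀ i, dd i F x = 0 := by
    intro x hx
    obtain ⟨D0, D1, D2⟩ := D x
    have : (x 1 ≤ k - ε ∨ k + 1 + ε ≤ x 1) ∨ y 2 - x 2 ≤ 0 := by
      by_contra! hh
      exact hx ⟨hh.1.1, hh.1.2, by linarith [hh.2]⟩
    rcases this with h1 | h1
    · have g0 := plat_eq_zero hε0 h1
      have g1 := platD_eq_zero hε0 h1
      refine ⟨by simp [hF, tens, g0], fun i => ?_⟩
      fin_cases i
      · simp [D0, g0]
      · simp [D1, g1]
      · simp [D2, g0]
    · have g0 := step_of_nonpos h1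
      have g1 := stepD_of_nonpos h1
      refine ⟨by simp [hF, tens, g0], fun i => ?_⟩
      fin_cases i
      · simp [D0, g0]
      · simp [D1, g0]
      · simp [D2, g0, g1]
  have hsupp : ∀ x ∈ tsupport F, κ ≤ ‖ψ x‖ := by
    have hcl : IsClosed {x | κ ≤ ‖ψ x‖} := isClosed_le continuous_const hψ.norm
    refine fun x hx => closure_minimal (fun x hx => ?_) hcl hx
    by_contra hlt
    refine hx (hout x fun hh => hlt ?_).1
    exact (hbelow x hh.1.le hh.2.1.le hh.2.2).le
  have hne : ∀ x ∈ tsupport F, U x ^ 2 + V x ^ 2 ≠ 0 := fun x hx => by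
    have := hsupp x hx
    rw [← norm_sq_eq]
    have : 0 < ‖ψ x‖ := by linarith
    positivity
  obtain ⟨f1, -, f3⟩ := h.integral_flux 2 (α := phaseMom U V 2) (γ := phaseMom U V 0)
    (contDiff_tens cR cg ch) (hasCompactSupport_tens cR cg ch)
    (fun x hx => h.contDiffAt_phaseMom 2 (hne x hx))
    (fun x hx => h.contDiffAt_phaseMom 0 (hne x hx)) (fun x hx => h.curl_phase 2 (hne x hx))
  rw [← hF] at f1 f3
  set B := closedBall p ε with hB
  set Q : ℝ := 4 / R * (5 + 2 * c * (1 / 2 + 1 / κ ^ 2)) with hQ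
  have hQ0 : 0 ≤ Q := by positivity
  have hTx : ∀ x, 0 ≤ grd ψ 1 x + grd ψ 2 x := fun x => by unfold grd; positivity
  have key : ∀ x, B.indicator (fun _ => d ^ 3 / 4 * (η / 2)) x ≤
      flux c U V 2 (phaseMom U V 2) (phaseMom U V 0) F x
      + (4 / ε + 2) * S.indicator (fun x => grd ψ 1 x + grd ψ 2 x) x + Q * den U V x := by
    intro x
    by_cases hx : k - ε < x 1 ∧ x 1 < k + 1 + ε ∧ x 2 < y 2
    · obtain ⟨D0, D1, D2⟩ := D x
      have hρ := (hbelow x hx.1.le hx.2.1.le hx.2.2).le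
      have hxS : x ∈ S := ⟨by linarith [hx.1], by linarith [hx.2.1]⟩
      rw [Set.indicator_of_mem hxS]
      have ab : ∀ {p q r P : ℝ}, |p| ≤ P → 0 ≤ q → q ≤ 1 → 0 ≤ r → r ≤ 1 →
          |p * q * r| ≤ P := fun {p q r P} hp hq hq1 hr hr1 => by
        rw [abs_mul, abs_mul, abs_of_nonneg hq, abs_of_nonneg hr]
        exact (mul_le_of_le_one_right (by positivity) hr1).trans
          ((mul_le_of_le_one_right (by positivity) hq1).trans hp)
      have st0 := step_nonneg (y 2 - x 2)
      have st1 := step_le_one (y 2 - x 2)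
      have hpr0 : 0 ≤ step (y 2 - x 2) * plat (-R) R R (x 2) := mul_nonneg st0 plat_nonneg
      have hpr1 : step (y 2 - x 2) * plat (-R) R R (x 2) ≤ 1 :=
        mul_le_one₀ st1 plat_nonneg plat_le_one
      have b0 : |dd 0 F x| ≤ 4 / R := by
        rw [D0]; exact ab (abs_platD_le hR0) plat_nonneg plat_le_one hpr0 hpr1
      have b1 : |dd 1 F x| ≤ 4 / ε := by
        rw [D1, mul_comm (plat (-R) R R (x 0))]
        exact ab (abs_platD_le hε0) plat_nonneg plat_le_one hpr0 hpr1
      set m := plat (-R) R R (x 0) * plat k (k + 1) ε (x 1)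
        * (stepD (y 2 - x 2) * plat (-R) R R (x 2)) with hm
      set n := platD (-R) R R (x 2) * plat (-R) R R (x 0)
        * (plat k (k + 1) ε (x 1) * step (y 2 - x 2)) with hn
      have hm0 : 0 ≤ m := mul_nonneg (mul_nonneg plat_nonneg plat_nonneg)
        (mul_nonneg (stepD_nonneg _) plat_nonneg)
      have hm2 : m ≤ 2 := by
        have e : m = stepD (y 2 - x 2) * plat (-R) R R (x 0)
          * (plat k (k + 1) ε (x 1) * plat (-R) R R (x 2)) := by rw [hm]; ring
        rw [e]
        exact (le_abs_self _).trans (ab (by rw [abs_of_nonneg (stepD_nonneg _)]; exact stepD_le _)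
          plat_nonneg plat_le_one (mul_nonneg plat_nonneg plat_nonneg)
          (mul_le_one₀ plat_le_one plat_nonneg plat_le_one))
      have hn4 : |n| ≤ 4 / R := ab (abs_platD_le hR0) plat_nonneg plat_le_one
        (mul_nonneg plat_nonneg st0) (mul_le_one₀ plat_le_one st0 st1)
      have b2 : dd 2 F x = -m + n := by rw [D2, hm, hn]; ring
      refine le_trans ?_ (flux_pointwise hc hκ hR0 hρ b0 b1 b2 hm2 hn4)
      have hw0 : 0 < U x ^ 2 + V x ^ 2 := by
        rw [← norm_sq_eq]
        have : 0 < ‖ψ x‖ := by linarith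
        positivity
      have hden := den_add_phaseMom_ge (c := c) hw0
      have ew : c ^ 2 / 2 = κ ^ 2 := by linarith
      rw [ew, ← norm_sq_eq] at hden
      by_cases hxB : x ∈ B
      · rw [Set.indicator_of_mem hxB]
        obtain ⟨p1, p2, p3, p4, p5, p6⟩ := hp x hxB
        have hpot := potential_ge hκ hκs hd0 p5 p6
        have hxR : ∀ i, -R ≤ x i ∧ x i ≤ R := fun i => by
          have h1 : |x i| ≤ ‖x‖ := PiLp.norm_apply_le x i
          have h2 : ‖x - p‖ ≤ ε := by rw [← dist_eq_norm]; exact hxB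
          have h3 := norm_le_norm_add_norm_sub' x p
          exact abs_le.1 (by linarith)
        have hmη : η / 2 ≤ m := by
          rw [hm, plat_eq_one hR0 (hxR 0).1 (hxR 0).2, plat_eq_one hε0 p1 p2,
            plat_eq_one hR0 (hxR 2).1 (hxR 2).2]
          have := le_stepD (t := y 2 - x 2)
          nlinarith
        exact mul_le_mul (hpot.trans hden) hmη (by positivity)
          ((by positivity : (0 : ℝ) ≤ d ^ 3 / 4).trans (hpot.trans hden))
      · rw [Set.indicator_of_notMem hxB]
        refine mul_nonneg (le_trans ?_ hden) hm0
        have : κ ^ 2 / ‖ψ x‖ ^ 2 ≤ 1 := by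
          apply div_le_one_of_le₀ _ (by positivity)
          exact pow_le_pow_left₀ hκ.le hρ 2
        exact mul_nonneg (by positivity) (by linarith)
    · have hxB : x ∉ B := fun hxB => by
        obtain ⟨p1, p2, p3, -⟩ := hp x hxB
        exact hx ⟨by linarith, by linarith, by linarith⟩
      rw [Set.indicator_of_notMem hxB]
      have h0 := (hout x hx).2
      have hfz : flux c U V 2 (phaseMom U V 2) (phaseMom U V 0) F x = 0 := by
        simp [flux, h0]
      rw [hfz, zero_add]
      refine add_nonneg (mul_nonneg (by positivity) ?_) (mul_nonneg hQ0 (den_nonneg U V x))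
      exact Set.indicator_nonneg (fun x _ => hTx x) x
  have iB : Integrable (B.indicator fun _ => d ^ 3 / 4 * (η / 2)) := by
    rw [integrable_indicator_iff isClosed_closedBall.measurableSet]
    exact integrableOn_const measure_closedBall_lt_top.ne
  have iS : Integrable (S.indicator fun x => grd ψ 1 x + grd ψ 2 x) := hT.indicator hSm
  have hint := integral_mono iB ((f1.add (iS.const_mul (4 / ε + 2))).add (hE.const_mul Q)) key
  have hBv : volume.real B = vol := by
    rw [hvol, measureReal_def, measureReal_def, hB, Measure.addHaar_closedBall_center]
  simp only [Pi.add_apply] at hint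
  rw [integral_indicator_const _ isClosed_closedBall.measurableSet, integral_add
    (f := fun x => flux c U V 2 (phaseMom U V 2) (phaseMom U V 0) F x
      + (4 / ε + 2) * S.indicator (fun x => grd ψ 1 x + grd ψ 2 x) x)
    (f1.add (iS.const_mul (4 / ε + 2))) (hE.const_mul Q), integral_add f1
    (iS.const_mul (4 / ε + 2)), f3, integral_const_mul, integral_const_mul,
    integral_indicator hSm, hBv, smul_eq_mul] at hint
  have hQM : Q * ∫ x, den U V x = M / R := by rw [hQ, hM]; ring
  rw [hQM] at hint
  rw [div_le_iff₀ (by positivity)]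
  have : vol * (d ^ 3 / 4 * (η / 2)) = l := by rw [hl]; ring
  linarith

/-! ### Real form of the equation and bound on the transverse energy -/

lemma dd_reP {ψ : Ed 3 → ℂ} {x : Ed 3} (h : DifferentiableAt ℝ ψ x) (i : Fin 3) :
    dd i (reP ψ) x = (pd ψ i x).re := by
  have := (Complex.reCLM.hasFDerivAt.comp x h.hasFDerivAt).fderiv
  have e : reP ψ = Complex.reCLM ∘ ψ := rfl
  rw [dd, e, this]; rfl

lemma dd_imP {ψ : Ed 3 → ℂ} {x : Ed 3} (h : DifferentiableAt ℝ ψ x) (i : Fin 3) :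
    dd i (imP ψ) x = (pd ψ i x).im := by
  have := (Complex.imCLM.hasFDerivAt.comp x h.hasFDerivAt).fderiv
  have e : imP ψ = Complex.imCLM ∘ ψ := rfl
  rw [dd, e, this]; rfl

section bridge

variable {ψ : Ed 3 → ℂ}

lemma grd_eq (hψ : ContDiff ℝ (⊤ : ℕ∞) ψ) (i : Fin 3) (x : Ed 3) : grd ψ i x = ‖pd ψ i x‖ ^ 2 := by
  have hd : DifferentiableAt ℝ ψ x := (hψ.differentiable (by simp)) x
  rw [grd, dd_reP hd, dd_imP hd, ← Complex.normSq_eq_norm_sq, Complex.normSq_apply]; ring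

lemma eDen_eq (hψ : ContDiff ℝ (⊤ : ℕ∞) ψ) : eDen ψ = den (reP ψ) (imP ψ) := by
  ext x
  unfold eDen den gradSq
  rw [norm_sq_eq]
  congr 2
  exact Finset.sum_congr rfl fun i _ => (grd_eq hψ i x).symm

lemma contDiff_pd (hψ : ContDiff ℝ (⊤ : ℕ∞) ψ) (i : Fin 3) : ContDiff ℝ (⊤ : ℕ∞) (pd ψ i) :=
  (hψ.fderiv_right (m := (⊤ : ℕ∞)) (by simp)).clm_apply contDiff_const

lemma realSol_of_GPeq {c : ℝ} (hψ : ContDiff ℝ (⊤ : ℕ∞) ψ) (h : GPeq c ψ) : RealSol c (reP ψ) (imP ψ) := by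
  have hd : ∀ x, DifferentiableAt ℝ ψ x := hψ.differentiable (by simp)
  have hp : ∀ i x, DifferentiableAt ℝ (pd ψ i) x := fun i =>
    (contDiff_pd hψ i).differentiable (by simp)
  have e1 : ∀ i, dd i (reP ψ) = reP (pd ψ i) := fun i => funext fun x => dd_reP (hd x) i
  have e2 : ∀ i, dd i (imP ψ) = imP (pd ψ i) := fun i => funext fun x => dd_imP (hd x) i
  have hl : ∀ x, lap ψ x = ∑ i, pd (pd ψ i) i x := fun x => rfl
  refine ⟨Complex.reCLM.contDiff.comp hψ, Complex.imCLM.contDiff.comp hψ, fun x => ?_,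
    fun x => ?_⟩
  · have := congrArg Complex.re (h x)
    rw [hl, ← Complex.ofReal_pow, norm_sq_eq] at this
    generalize reP ψ x ^ 2 + imP ψ x ^ 2 = w at this ⊢
    simp [Fin.sum_univ_three] at this
    simp only [Fin.sum_univ_three, e1, e2, dd_reP (hp _ x)]
    simp only [reP, imP] at this ⊢
    linarith
  · have := congrArg Complex.im (h x)
    rw [hl, ← Complex.ofReal_pow, norm_sq_eq] at this
    generalize reP ψ x ^ 2 + imP ψ x ^ 2 = w at this ⊢
    simp [Fin.sum_univ_three] at this
    simp only [Fin.sum_univ_three, e1, e2, dd_imP (hp _ x)]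
    simp only [reP, imP] at this ⊢
    linarith

lemma lipschitz_of_pd (hψ : ContDiff ℝ (⊤ : ℕ∞) ψ) (hb : ∀ i x, ‖pd ψ i x‖ ^ 2 ≤ 130)
    (x y : Ed 3) :
    ‖ψ x - ψ y‖ ≤ 36 * ‖x - y‖ := by
  refine Convex.norm_image_sub_le_of_norm_fderiv_le (𝕜 := ℝ) (s := Set.univ)
    (fun z _ => (hψ.differentiable (by simp)) z) (fun z _ => ?_) convex_univ trivial trivial
  refine ContinuousLinearMap.opNorm_le_bound _ (by norm_num) fun v => ?_
  have hv : v = ∑ i, v i • EuclideanSpace.single i (1 : ℝ) := by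
    ext j; simp [Fin.sum_univ_three]; fin_cases j <;> simp
  have h12 : ∀ i, ‖pd ψ i z‖ ≤ 12 := fun i => by
    nlinarith [hb i z, norm_nonneg (pd ψ i z)]
  have : fderiv ℝ ψ z v = ∑ i, v i • pd ψ i z := by
    conv_lhs => rw [hv]
    simp [map_sum, pd]
  rw [this]
  refine (norm_sum_le _ _).trans ?_
  have : ∀ i ∈ Finset.univ, ‖v i • pd ψ i z‖ ≤ ‖v‖ * 12 := fun i _ => by
    rw [norm_smul]
    exact mul_le_mul (PiLp.norm_apply_le v i) (h12 i) (norm_nonneg _) (norm_nonneg _)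
  refine (Finset.sum_le_sum this).trans (le_of_eq ?_)
  simp; ring

end bridge

/-- The properties of a travelling wave used in the covering argument. The last field bounds the
transverse energy; it comes from the Pohozaev identity. -/
structure Wave (c C : ℝ) (ψ : Ed 3 → ℂ) : Prop where
  smooth : ContDiff ℝ (⊤ : ℕ∞) ψ
  sol : RealSol c (reP ψ) (imP ψ)
  fin : Integrable (den (reP ψ) (imP ψ))
  lip : ∀ x y, ‖ψ x - ψ y‖ ≤ 36 * ‖x - y‖
  lim : Tendsto ψ (cocompact (Ed 3)) (𝓝 1)
  trans : ∀ j ≠ 0, ∫ x, grd ψ j x ≤ 2 * C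

/-- In the transverse bound, the case where the momentum density is not integrable is treated
separately: then `mom ψ = 0` by convention, and the Lagrangian is the energy. -/
lemma Wave.of_sol {c C : ℝ} {ψ : Ed 3 → ℂ} (hc : c ^ 2 ≤ 2) (hψ : ContDiff ℝ (⊤ : ℕ∞) ψ)
    (heq : GPeq c ψ) (hE : FiniteEnergy ψ) (hlim : Tendsto ψ (cocompact (Ed 3)) (𝓝 1))
    (hI : |lagr c ψ| ≤ C) : Wave c C ψ := by
  have h := realSol_of_GPeq hψ heq
  have hE' : Integrable (den (reP ψ) (imP ψ)) := by rw [← eDen_eq hψ]; exact hE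
  have hρ := h.sup_bound hc (by
    have := (hlim.norm).pow 2
    simpa [norm_sq_eq] using this)
  have hg := h.grad_bound hc hρ
  have hd : ∀ x, DifferentiableAt ℝ ψ x := hψ.differentiable (by simp)
  refine ⟨hψ, h, hE', lipschitz_of_pd hψ fun i x => ?_, hlim, fun j hj => ?_⟩
  · rw [← grd_eq hψ]; exact hg i x
  · have hC : 0 ≤ C := (abs_nonneg _).trans hI
    have hm : mom ψ = -∫ x, (reP ψ x - 1) * dd 0 (imP ψ) x := by
      unfold mom
      congr 2; ext x
      rw [dd_imP (hd x), mul_comm]; rfl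
    have hen : energy ψ = ∫ x, den (reP ψ) (imP ψ) x := by rw [energy, eDen_eq hψ]
    have hl := le_of_abs_le hI
    rw [lagr, hm, hen] at hl
    by_cases hi : Integrable fun x => (reP ψ x - 1) * dd 0 (imP ψ) x
    · have := h.pohozaev hE' (fun x => by
        apply abs_le_of_sq_le_sq (by nlinarith [hρ x, sq_nonneg (imP ψ x)]) (by norm_num)) hj hi
      rw [integral_add hE' (hi.const_mul c), integral_const_mul] at this
      unfold grd
      rw [this]; linarith
    · rw [integral_undef hi] at hl
      calc ∫ x, grd ψ j x ≤ ∫ x, 2 * den (reP ψ) (imP ψ) x :=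
            integral_mono (h.integrable_grad hE' j) (hE'.const_mul 2)
              fun x => grad_le_den _ _ j x
        _ = 2 * ∫ x, den (reP ψ) (imP ψ) x := integral_const_mul _ _
        _ ≤ 2 * C := by linarith

/-! ### Transverse lines leave the sublevel set, and each near-vortex point carries energy -/

/-- Slabs of width three placed at consecutive integers overlap at most four times. -/
lemma slab_sum_le {f : Ed 3 → ℝ} (hf : Integrable f) (hf0 : ∀ x, 0 ≤ f x) (k₀ : ℤ) (n : ℕ) :
    ∑ i ∈ Finset.range n, ∫ x in {x : Ed 3 | ((k₀ + i : ℤ) : ℝ) - 1 ≤ x 1 ∧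
      x 1 ≤ ((k₀ + i : ℤ) : ℝ) + 2}, f x ≤ 4 * ∫ x, f x := by
  set S : ℕ → Set (Ed 3) := fun i => {x : Ed 3 | ((k₀ + i : ℤ) : ℝ) - 1 ≤ x 1 ∧
      x 1 ≤ ((k₀ + i : ℤ) : ℝ) + 2} with hS
  have hSm : ∀ i, MeasurableSet (S i) := fun i =>
    ((isClosed_le (f := fun _ => ((k₀ + i : ℤ) : ℝ) - 1) (g := fun x : Ed 3 => x 1)
      continuous_const (by fun_prop)).inter
    (isClosed_le (f := fun x : Ed 3 => x 1) (g := fun _ => ((k₀ + i : ℤ) : ℝ) + 2)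
      (by fun_prop) continuous_const)).measurableSet
  calc ∑ i ∈ Finset.range n, ∫ x in S i, f x
      = ∑ i ∈ Finset.range n, ∫ x, (S i).indicator f x :=
        Finset.sum_congr rfl fun i _ => (integral_indicator (hSm i)).symm
    _ = ∫ x, ∑ i ∈ Finset.range n, (S i).indicator f x :=
        (integral_finsetSum _ fun i _ => hf.indicator (hSm i)).symm
    _ ≤ ∫ x, 4 * f x := by
        refine integral_mono (integrable_finsetSum _ fun i _ => hf.indicator (hSm i))
          (hf.const_mul 4) fun x => ?_
        classical
        have : ∀ i, (S i).indicator f x = if x ∈ S i then f x else 0 := fun i =>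
          Set.indicator_apply _ _ _
        simp only [this]
        rw [← Finset.sum_filter, Finset.sum_const, nsmul_eq_mul]
        refine mul_le_mul_of_nonneg_right ?_ (hf0 x)
        have hc : ((Finset.range n).filter fun i => x ∈ S i).card ≤
            (Finset.Icc ⌈x 1 - 2⌉ ⌊x 1 + 1⌋).card := by
          refine Finset.card_le_card_of_injOn (fun i => k₀ + i) (fun i hi => ?_)
            fun i _ j _ hij => by simpa using hij
          obtain ⟨-, h1, h2⟩ := Finset.mem_filter.1 hi
          exact Finset.mem_coe.2 (Finset.mem_Icc.2
            ⟨Int.ceil_le.2 (by linarith), Int.le_floor.2 (by linarith)⟩)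
        have h4 : (Finset.Icc ⌈x 1 - 2⌉ ⌊x 1 + 1⌋).card ≤ 4 := by
          rw [Int.card_Icc]
          have h1 := Int.floor_le (x 1 + 1)
          have h2 := Int.le_ceil (x 1 - 2)
          have : (⌊x 1 + 1⌋ : ℝ) ≤ ⌈x 1 - 2⌉ + 3 := by linarith
          have : ⌊x 1 + 1⌋ ≤ ⌈x 1 - 2⌉ + 3 := by exact_mod_cast this
          omega
        exact_mod_cast hc.trans h4
    _ = 4 * ∫ x, f x := integral_const_mul _ _

/-- The unit vector of the second coordinate axis. -/
def e₁ : Ed 3 := EuclideanSpace.single 1 1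

lemma norm_e₁ : ‖e₁‖ = 1 := by simp [e₁]

lemma grd_nonneg (ψ : Ed 3 → ℂ) (i : Fin 3) (x : Ed 3) : 0 ≤ grd ψ i x := by
  unfold grd; positivity

/-- By the strip estimate and the bound on the transverse energy, a segment in direction `e₁`
of sufficient length leaves the sublevel set `{|ψ| ≤ c / √2}`. -/
lemma exists_exit (s : ℝ) (hs0 : 0 < s) (hs1 : s < 1) (C : ℝ) : ∃ l : ℝ, 1 ≤ l ∧
    ∀ (c κ : ℝ) (ψ : Ed 3 → ℂ), 0 < c → 0 < κ → κ ≤ s → c ^ 2 = 2 * κ ^ 2 → Wave c C ψ →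
      ∀ x : Ed 3, ∃ t ∈ Set.Icc 0 l, κ < ‖ψ (x + t • e₁)‖ := by
  obtain ⟨δ, hδ, hstrip⟩ := strip s hs0 hs1
  obtain ⟨n, hn⟩ := exists_nat_gt (16 * C / δ)
  refine ⟨n + 1, by simp, fun c κ ψ hc hκ hκs hcκ h x => ?_⟩
  by_contra! hx
  have i1 := h.sol.integrable_grad h.fin 1
  have i2 := h.sol.integrable_grad h.fin 2
  have hb := slab_sum_le (f := fun x => grd ψ 1 x + grd ψ 2 x) (i1.add i2)
    (fun x => add_nonneg (grd_nonneg ψ 1 x) (grd_nonneg ψ 2 x)) ⌈x 1⌉ n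
  rw [integral_add (f := grd ψ 1) (g := grd ψ 2) i1 i2] at hb
  have hle : ∑ i ∈ Finset.range n, δ ≤ _ := Finset.sum_le_sum fun i hi =>
    hstrip c κ ψ hc hκ hκs hcκ h.sol h.fin h.smooth.continuous h.lip h.lim
      ((⌈x 1⌉ + i : ℤ) : ℝ) (by
        have hi : (i : ℝ) + 1 ≤ n := by exact_mod_cast Finset.mem_range.1 hi
        have c1 := Int.le_ceil (x 1)
        have c2 := Int.ceil_lt_add_one (x 1)
        refine ⟨x + (((⌈x 1⌉ + i : ℤ) : ℝ) - x 1) • e₁, hx _ ⟨?_, ?_⟩, ?_⟩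
        · push_cast; linarith [Nat.cast_nonneg (α := ℝ) i]
        · push_cast; linarith
        · simp [e₁])
  have h1 := h.trans 1 (by decide)
  have h2 := h.trans 2 (by decide)
  have := hle.trans hb
  rw [Finset.sum_const, Finset.card_range, nsmul_eq_mul] at this
  rw [div_lt_iff₀ hδ] at hn
  linarith

/-- The increment of `ψ` along a segment in direction `e₁`, by Young's inequality. -/
lemma increment_le {ψ : Ed 3 → ℂ} (hψ : ContDiff ℝ (⊤ : ℕ∞) ψ) (y : Ed 3) {t l ε : ℝ}
    (ht : t ∈ Set.Icc 0 l) (hε : 0 < ε) :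
    ‖ψ (y + t • e₁) - ψ y‖ ≤ (∫ u in (0)..l, grd ψ 1 (y + u • e₁)) / (2 * ε) + ε / 2 * l := by
  have hline : ∀ u : ℝ, HasDerivAt (fun u : ℝ => y + u • e₁) e₁ u := fun u => by
    simpa using ((hasDerivAt_id u).smul_const e₁).const_add y
  have hder : ∀ u : ℝ, HasDerivAt (fun u : ℝ => ψ (y + u • e₁)) (pd ψ 1 (y + u • e₁)) u :=
    fun u => ((hψ.differentiable (by simp)) _).hasFDerivAt.comp_hasDerivAt u (hline u)
  have hlc : Continuous fun u : ℝ => y + u • e₁ := by fun_prop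
  have hc1 : Continuous fun u : ℝ => pd ψ 1 (y + u • e₁) :=
    (contDiff_pd hψ 1).continuous.comp hlc
  have hg : grd ψ 1 = fun x => ‖pd ψ 1 x‖ ^ 2 := funext (grd_eq hψ 1)
  have hc2 : Continuous fun u : ℝ => grd ψ 1 (y + u • e₁) := by
    rw [hg]; exact hc1.norm.pow 2
  have hftc := intervalIntegral.integral_eq_sub_of_hasDerivAt (a := 0) (b := t)
    (fun u _ => hder u) (hc1.intervalIntegrable _ _)
  have e0 : ψ (y + t • e₁) - ψ y = ∫ u in (0)..t, pd ψ 1 (y + u • e₁) := by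
    rw [hftc]; simp
  have hl : 0 ≤ l := ht.1.trans ht.2
  calc ‖ψ (y + t • e₁) - ψ y‖ ≤ ∫ u in (0)..t, ‖pd ψ 1 (y + u • e₁)‖ := by
        rw [e0]; exact intervalIntegral.norm_integral_le_integral_norm ht.1
    _ ≤ ∫ u in (0)..l, ‖pd ψ 1 (y + u • e₁)‖ :=
        intervalIntegral.integral_mono_interval le_rfl ht.1 ht.2
          (Eventually.of_forall fun u => norm_nonneg _) (hc1.norm.intervalIntegrable _ _)
    _ ≤ ∫ u in (0)..l, (grd ψ 1 (y + u • e₁) / (2 * ε) + ε / 2) := by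
        refine intervalIntegral.integral_mono_on hl (hc1.norm.intervalIntegrable _ _)
          (((hc2.div_const _).add continuous_const).intervalIntegrable _ _) fun u _ => ?_
        rw [grd_eq hψ]
        set a := ‖pd ψ 1 (y + u • e₁)‖
        have : a ^ 2 / (2 * ε) + ε / 2 - a = (a - ε) ^ 2 / (2 * ε) := by field_simp; ring
        have h2 : 0 ≤ (a - ε) ^ 2 / (2 * ε) := by positivity
        linarith
    _ = _ := by
        rw [intervalIntegral.integral_add ((hc2.div_const _).intervalIntegrable _ _)
          (continuous_const.intervalIntegrable _ _), intervalIntegral.integral_div]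
        simp; ring

lemma translate_le {f : Ed 3 → ℝ} (hf : Continuous f) (hf0 : ∀ x, 0 ≤ f x) (x₀ : Ed 3)
    {l a u : ℝ} (hu : u ∈ Set.Ioc 0 l) (ha : a ≤ 1) :
    ∫ y in closedBall x₀ a, f (y + u • e₁) ≤ ∫ x in closedBall x₀ (l + 1), f x := by
  have hmeas : MeasurableSet (closedBall x₀ a) := isClosed_closedBall.measurableSet
  have hB : IntegrableOn f (closedBall x₀ (l + 1)) :=
    hf.continuousOn.integrableOn_compact (isCompact_closedBall _ _)
  have hsub : ∀ y, (closedBall x₀ a).indicator (fun y => f (y + u • e₁)) y ≤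
      (closedBall x₀ (l + 1)).indicator f (y + u • e₁) := fun y => by
    by_cases hy : y ∈ closedBall x₀ a
    · have hy' : y + u • e₁ ∈ closedBall x₀ (l + 1) := by
        rw [mem_closedBall, dist_eq_norm] at hy ⊢
        have e : y + u • e₁ - x₀ = (y - x₀) + u • e₁ := by abel
        rw [e]
        refine (norm_add_le _ _).trans ?_
        rw [norm_smul, norm_e₁, Real.norm_of_nonneg hu.1.le]
        linarith [hu.2]
      rw [Set.indicator_of_mem hy, Set.indicator_of_mem hy']
    · rw [Set.indicator_of_notMem hy]
      exact Set.indicator_nonneg (fun x _ => hf0 x) _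
  have hi : Integrable ((closedBall x₀ (l + 1)).indicator f) :=
    (integrable_indicator_iff isClosed_closedBall.measurableSet).2 hB
  rw [← integral_indicator hmeas, ← integral_indicator isClosed_closedBall.measurableSet,
    ← integral_add_right_eq_self ((closedBall x₀ (l + 1)).indicator f) (u • e₁)]
  refine integral_mono ((integrable_indicator_iff hmeas).2 ?_) (hi.comp_add_right _) hsub
  exact (Continuous.continuousOn (by fun_prop)).integrableOn_compact
    (isCompact_closedBall _ _)

/-- The average over translates of a ball is controlled by the integral over a larger ball. -/
lemma average_le {f : Ed 3 → ℝ} (hf : Continuous f) (hf0 : ∀ x, 0 ≤ f x) (x₀ : Ed 3) {l a : ℝ}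
    (hl : 0 ≤ l) (ha : a ≤ 1) :
    ∫ y in closedBall x₀ a, ∫ u in (0)..l, f (y + u • e₁) ≤
      l * ∫ x in closedBall x₀ (l + 1), f x := by
  have hmeas : MeasurableSet (closedBall x₀ a) := isClosed_closedBall.measurableSet
  have hint : Integrable (Function.uncurry fun (y : Ed 3) (u : ℝ) => f (y + u • e₁))
      ((volume.restrict (closedBall x₀ a)).prod (volume.restrict (Set.Ioc 0 l))) := by
    rw [Measure.prod_restrict]
    have hc : Continuous (Function.uncurry fun (y : Ed 3) (u : ℝ) => f (y + u • e₁)) := by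
      simp only [Function.uncurry_def]; fun_prop
    exact (hc.continuousOn.integrableOn_compact
      ((isCompact_closedBall x₀ a).prod isCompact_Icc)).mono_set
      (Set.prod_mono le_rfl Set.Ioc_subset_Icc_self)
  simp only [intervalIntegral.integral_of_le hl]
  rw [integral_integral_swap hint]
  have hconst : IntegrableOn (fun _ : ℝ => ∫ x in closedBall x₀ (l + 1), f x) (Set.Ioc 0 l) :=
    integrableOn_const measure_Ioc_lt_top.ne
  refine (setIntegral_mono_on hint.integral_prod_right hconst measurableSet_Ioc
    fun u hu => translate_le hf hf0 x₀ hu ha).trans ?_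
  simp [hl]

/-- Every point of `{|ψ| < r}` with `r` below `c / √2` has a definite amount of the energy
`∫ |∂₁ψ|²` in a fixed neighbourhood. -/
lemma local_lower (s r κ₀ : ℝ) (hs0 : 0 < s) (hs1 : s < 1) (hκ₀ : 0 < κ₀) (hr : r < κ₀) (C : ℝ) :
    ∃ l : ℝ, 1 ≤ l ∧ ∃ δ > 0, ∀ (c κ : ℝ) (ψ : Ed 3 → ℂ), 0 < c → κ₀ ≤ κ → κ ≤ s →
      c ^ 2 = 2 * κ ^ 2 → Wave c C ψ → ∀ x : Ed 3, ‖ψ x‖ < r →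
        δ ≤ ∫ y in closedBall x (l + 1), grd ψ 1 y := by
  obtain ⟨l, hl, hexit⟩ := exists_exit s hs0 hs1 C
  set D : ℝ := (κ₀ - r) / 2 with hD
  have hD0 : 0 < D := by rw [hD]; linarith
  set a : ℝ := min 1 (D / 72) with ha
  have ha0 : 0 < a := lt_min one_pos (by positivity)
  have ha1 : a ≤ 1 := min_le_left _ _
  have ha2 : a ≤ D / 72 := min_le_right _ _
  set vol : ℝ := volume.real (closedBall (0 : Ed 3) a) with hvol
  have hvol0 : 0 < vol :=
    ENNReal.toReal_pos (measure_closedBall_pos volume _ ha0).ne' measure_closedBall_lt_top.ne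
  have hl0 : 0 < l := by linarith
  set ε : ℝ := D / l with hε
  have hε0 : 0 < ε := by positivity
  refine ⟨l, hl, vol * (D * ε) / l, by positivity, fun c κ ψ hc hκ hκs hcκ h x hx => ?_⟩
  obtain ⟨t, ht, htκ⟩ := hexit c κ ψ hc (hκ₀.trans_le hκ) hκs hcκ h x
  have hcg : Continuous (grd ψ 1) := by
    have hg : grd ψ 1 = fun x => ‖pd ψ 1 x‖ ^ 2 := funext (grd_eq h.smooth 1)
    rw [hg]; exact (contDiff_pd h.smooth 1).continuous.norm.pow 2
  have hpt : ∀ y ∈ closedBall x a, D * ε ≤ ∫ u in (0)..l, grd ψ 1 (y + u • e₁) := by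
    intro y hy
    have hyx : ‖y - x‖ ≤ a := by rw [← dist_eq_norm]; exact hy
    have h1 := h.lip y x
    have h2 := h.lip (x + t • e₁) (y + t • e₁)
    rw [show x + t • e₁ - (y + t • e₁) = -(y - x) by abel, norm_neg] at h2
    have h3 := increment_le h.smooth y ht hε0
    have h4 := norm_le_norm_add_norm_sub' (ψ y) (ψ x)
    have h5 := norm_le_norm_add_norm_sub' (ψ (x + t • e₁)) (ψ (y + t • e₁))
    have h6 := norm_le_norm_add_norm_sub' (ψ (y + t • e₁)) (ψ y)
    have h7 : ε / 2 * l = D / 2 := by rw [hε]; field_simp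
    have h8 : D / 2 ≤ (∫ u in (0)..l, grd ψ 1 (y + u • e₁)) / (2 * ε) := by
      linarith
    rw [le_div_iff₀ (by positivity)] at h8
    linarith
  have havg := average_le hcg (grd_nonneg ψ 1) x hl0.le ha1
  have hlow : vol * (D * ε) ≤ ∫ y in closedBall x a, ∫ u in (0)..l, grd ψ 1 (y + u • e₁) := by
    have hconst : IntegrableOn (fun _ : Ed 3 => D * ε) (closedBall x a) :=
      integrableOn_const measure_closedBall_lt_top.ne
    have hcont : Continuous fun y : Ed 3 => ∫ u in (0)..l, grd ψ 1 (y + u • e₁) :=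
      intervalIntegral.continuous_parametric_intervalIntegral_of_continuous'
        (by simp only [Function.uncurry_def]; fun_prop) _ _
    have := setIntegral_mono_on hconst
      (hcont.continuousOn.integrableOn_compact (isCompact_closedBall x a))
      isClosed_closedBall.measurableSet hpt
    rw [setIntegral_const, smul_eq_mul, measureReal_def, Measure.addHaar_closedBall_center,
      ← measureReal_def] at this
    exact this
  rw [div_le_iff₀ hl0, mul_comm _ l]
  exact hlow.trans havg

/-! ### Covering by disjoint balls -/

/-- A set without large separated finite subsets is covered by few balls. -/
lemma exists_cover {S : Set (Ed 3)} {ρ : ℝ} {N : ℕ} (hρ : 0 ≤ ρ)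
    (h : ∀ T : Finset (Ed 3), (∀ x ∈ T, x ∈ S) →
      (∀ x ∈ T, ∀ y ∈ T, x ≠ y → ρ < dist x y) → T.card ≤ N) :
    ∃ T : Finset (Ed 3), T.card ≤ N ∧ S ⊆ ⋃ x ∈ T, closedBall x ρ := by
  classical
  by_contra! hno
  have : ∀ n : ℕ, ∃ T : Finset (Ed 3), T.card = n ∧ (∀ x ∈ T, x ∈ S) ∧
      ∀ x ∈ T, ∀ y ∈ T, x ≠ y → ρ < dist x y := by
    intro n
    induction n with
    | zero => exact ⟨∅, by simp⟩
    | succ n ih =>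
      obtain ⟨T, hT, hTS, hsep⟩ := ih
      obtain ⟨z, hzS, hz⟩ := Set.not_subset.1 (hno T (h T hTS hsep))
      simp only [Set.mem_iUnion, mem_closedBall, not_exists, not_le] at hz
      have hzT : z ∉ T := fun hzT => by
        have := hz z hzT
        rw [dist_self] at this
        linarith
      refine ⟨insert z T, by rw [Finset.card_insert_of_notMem hzT, hT], ?_, ?_⟩
      · simpa using ⟨hzS, hTS⟩
      · intro x hx y hy hxy
        rcases Finset.mem_insert.1 hx with hx' | hx' <;>
          rcases Finset.mem_insert.1 hy with hy' | hy'
        · exact absurd (hx'.trans hy'.symm) hxy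
        · rw [hx']; exact hz y hy'
        · rw [hy', dist_comm]; exact hz x hx'
        · exact hsep x hx' y hy' hxy
  obtain ⟨T, hT, hTS, hsep⟩ := this (N + 1)
  have := h T hTS hsep
  omega

/-- Finitely many balls of equal radius are covered by at most as many disjoint balls of equal
radius: as long as two of them meet, one is dropped and the radius is tripled. -/
lemma exists_disjoint_cover (n : ℕ) : ∀ (T : Finset (Ed 3)) (ρ : ℝ), T.card = n → 0 < ρ →
    ∃ (T' : Finset (Ed 3)) (ρ' : ℝ), T'.card ≤ n ∧ ρ ≤ ρ' ∧ ρ' ≤ 3 ^ n * ρ ∧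
      (∀ x ∈ T', ∀ y ∈ T', x ≠ y → Disjoint (closedBall x ρ') (closedBall y ρ')) ∧
      (⋃ x ∈ T, closedBall x ρ) ⊆ ⋃ x ∈ T', closedBall x ρ' := by
  classical
  induction n with
  | zero =>
    intro T ρ hT hρ
    refine ⟨T, ρ, hT.le, le_rfl, by simp, ?_, le_rfl⟩
    rw [Finset.card_eq_zero.1 hT]; simp
  | succ n ih =>
    intro T ρ hT hρ
    by_cases hd : ∀ x ∈ T, ∀ y ∈ T, x ≠ y → Disjoint (closedBall x ρ) (closedBall y ρ)
    · exact ⟨T, ρ, hT.le, le_rfl,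
        le_mul_of_one_le_left hρ.le (one_le_pow₀ (by norm_num)), hd, le_rfl⟩
    · push Not at hd
      obtain ⟨x, hx, y, hy, hxy, hmeet⟩ := hd
      obtain ⟨z, hzx, hzy⟩ := Set.not_disjoint_iff.1 hmeet
      obtain ⟨T', ρ', h1, h2, h3, h4, h5⟩ := ih (T.erase y) (3 * ρ)
        (by rw [Finset.card_erase_of_mem hy, hT]; rfl) (by positivity)
      refine ⟨T', ρ', h1.trans (Nat.le_succ n), by linarith, ?_, h4, Set.Subset.trans ?_ h5⟩
      · calc ρ' ≤ 3 ^ n * (3 * ρ) := h3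
          _ = 3 ^ (n + 1) * ρ := by ring
      · refine Set.iUnion₂_subset fun w hw => ?_
        by_cases hwy : w = y
        · subst hwy
          refine Set.Subset.trans ?_
            (Set.subset_biUnion_of_mem (u := fun x => closedBall x (3 * ρ))
              (Finset.mem_coe.2 (Finset.mem_erase.2 ⟨hxy, hx⟩)))
          refine closedBall_subset_closedBall' ?_
          rw [mem_closedBall] at hzx hzy
          have := dist_triangle_left w x z
          linarith
        · refine Set.Subset.trans (closedBall_subset_closedBall (by linarith))
            (Set.subset_biUnion_of_mem (u := fun x => closedBall x (3 * ρ))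
              (Finset.mem_coe.2 (Finset.mem_erase.2 ⟨hwy, hw⟩)))

/-- `S` is contained in the union of at most `N` pairwise disjoint closed balls whose radii lie
in `(1, N)`. -/
def BallCover (S : Set (Ed 3)) (N : ℕ) : Prop :=
  ∃ (m : ℕ) (ξ : Fin m → Ed 3) (R : Fin m → ℝ),
    m ≤ N ∧ (∀ k, 1 < R k ∧ R k < N) ∧
    (Pairwise fun k l =>
      Disjoint (Metric.closedBall (ξ k) (R k)) (Metric.closedBall (ξ l) (R l))) ∧
    S ⊆ ⋃ k, Metric.closedBall (ξ k) (R k)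

lemma BallCover.mono {S : Set (Ed 3)} {N N' : ℕ} (h : BallCover S N) (hN : N ≤ N') :
    BallCover S N' := by
  obtain ⟨m, ξ, R, h1, h2, h3, h4⟩ := h
  exact ⟨m, ξ, R, h1.trans hN,
    fun k => ⟨(h2 k).1, (h2 k).2.trans_le (by exact_mod_cast hN)⟩, h3, h4⟩

/-- A cover by few equal balls can be made disjoint, with a bound depending only on the number
and the radius of the balls. -/
lemma BallCover.of_cover {ρ : ℝ} (hρ : 1 < ρ) (m : ℕ) : ∃ N : ℕ, ∀ S : Set (Ed 3),
    (∃ T : Finset (Ed 3), T.card ≤ m ∧ S ⊆ ⋃ x ∈ T, closedBall x ρ) → BallCover S N := by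
  obtain ⟨n, hn⟩ := exists_nat_gt (3 ^ m * ρ)
  refine ⟨max m n, ?_⟩
  rintro S ⟨T, hT, hS⟩
  obtain ⟨T', ρ', h1, h2, h3, h4, h5⟩ := exists_disjoint_cover T.card T ρ rfl (by linarith)
  refine ⟨T'.card, fun k => (T'.equivFin.symm k : Ed 3), fun _ => ρ',
    (h1.trans hT).trans (le_max_left _ _), fun _ => ⟨by linarith, ?_⟩, fun k l hkl => ?_, ?_⟩
  · have : (3 : ℝ) ^ T.card ≤ 3 ^ m := pow_le_pow_right₀ (by norm_num) hT
    have h6 : (n : ℝ) ≤ (max m n : ℕ) := by exact_mod_cast le_max_right m n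
    nlinarith
  · refine h4 _ (T'.equivFin.symm k).2 _ (T'.equivFin.symm l).2 fun e => hkl ?_
    exact T'.equivFin.symm.injective (Subtype.ext e)
  · refine (hS.trans h5).trans (Set.iUnion₂_subset fun x hx => ?_)
    refine Set.Subset.trans ?_ (Set.subset_iUnion _ (T'.equivFin ⟨x, hx⟩))
    simp

/-- The cover with constants that only depend on bounds for `c / √2`, on `r` and on the bound of
the Lagrangian. -/
lemma uniform_cover (s r κ₀ C : ℝ) (hs0 : 0 < s) (hs1 : s < 1) (hκ₀ : 0 < κ₀) (hr : r < κ₀) :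
    ∃ N : ℕ, ∀ (c κ : ℝ) (ψ : Ed 3 → ℂ), 0 < c → κ₀ ≤ κ → κ ≤ s → c ^ 2 = 2 * κ ^ 2 →
      Wave c C ψ → BallCover (Sset ψ r) N := by
  obtain ⟨l, hl, δ, hδ, hlow⟩ := local_lower s r κ₀ hs0 hs1 hκ₀ hr C
  obtain ⟨m, hm⟩ := exists_nat_gt (2 * C / δ)
  obtain ⟨N, hN⟩ := BallCover.of_cover (ρ := 2 * (l + 1)) (by linarith) m
  refine ⟨N, fun c κ ψ hc hκ hκs hcκ h => hN _ (exists_cover (by linarith) fun T hT hsep => ?_)⟩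
  have hi : Integrable (grd ψ 1) := h.sol.integrable_grad h.fin 1
  have hsum : ∑ x ∈ T, ∫ y in closedBall x (l + 1), grd ψ 1 y ≤ ∫ y, grd ψ 1 y := by
    rw [← integral_biUnion_finset (s := fun x => closedBall x (l + 1)) T (fun x _ => isClosed_closedBall.measurableSet)
      (fun x hx y hy hxy => closedBall_disjoint_closedBall
        (by linarith [hsep x hx y hy hxy])) (fun x _ => hi.integrableOn)]
    exact setIntegral_le_integral hi (Eventually.of_forall fun x => grd_nonneg ψ 1 x)
  have hge : ∑ _x ∈ T, δ ≤ _ :=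
    Finset.sum_le_sum fun x hx => hlow c κ ψ hc hκ hκs hcκ h x (hT x hx)
  have htr := (hge.trans hsum).trans (h.trans 1 (by decide))
  rw [Finset.sum_const, nsmul_eq_mul, ← le_div_iff₀ hδ] at htr
  exact_mod_cast (htr.trans hm.le)

/-- the near-vortex sets `S_n^r = {|ψ_n| < r}` with `r < c/√2` are covered
by a bounded number of pairwise disjoint closed balls with uniformly bounded radii. -/
theorem statement15 (c : ℝ) (hc : c ∈ Set.Ioo 0 (Real.sqrt 2))
    (cn : ℕ → ℝ) (hcn : ∀ n, cn n ∈ Set.Ioo 0 (Real.sqrt 2))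
    (hclim : Tendsto cn atTop (𝓝 c))
    (ψn : ℕ → Ed 3 → ℂ)
    (hsol : ∀ n, ContDiff ℝ (⊤ : ℕ∞) (ψn n) ∧ GPeq (cn n) (ψn n) ∧
      FiniteEnergy (ψn n) ∧ Nontriv (ψn n) ∧
      Tendsto (ψn n) (cocompact (Ed 3)) (𝓝 1))
    (C : ℝ) (hI : ∀ n, |lagr (cn n) (ψn n)| ≤ C)
    (r : ℝ) (hr0 : 0 < r) (hr : r < c / Real.sqrt 2) :
    ∃ N : ℕ, ∀ n, ∃ (m : ℕ) (ξ : Fin m → Ed 3) (R : Fin m → ℝ),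
      m ≤ N ∧ (∀ k, 1 < R k ∧ R k < N) ∧
      (Pairwise fun k l =>
        Disjoint (Metric.closedBall (ξ k) (R k)) (Metric.closedBall (ξ l) (R l))) ∧
      Sset (ψn n) r ⊆ ⋃ k, Metric.closedBall (ξ k) (R k) := by
  have h2 : 0 < Real.sqrt 2 := by positivity
  have hsq : Real.sqrt 2 ^ 2 = 2 := Real.sq_sqrt (by norm_num)
  have hc1 : c / Real.sqrt 2 < 1 := (div_lt_one h2).2 hc.2
  have hW : ∀ n, Wave (cn n) C (ψn n) := fun n => by
    obtain ⟨w1, w2, w3, -, w5⟩ := hsol n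
    refine Wave.of_sol ?_ w1 w2 w3 w5 (hI n)
    rw [← hsq]
    exact pow_le_pow_left₀ (hcn n).1.le (hcn n).2.le 2
  obtain ⟨κ₀, hκr, hκc⟩ := exists_between hr
  obtain ⟨s, hcs, hs1⟩ := exists_between hc1
  obtain ⟨N, hN⟩ := uniform_cover s r κ₀ C ((hr0.trans hr).trans hcs) hs1 (hr0.trans hκr) hκr
  have hlim : Tendsto (fun n => cn n / Real.sqrt 2) atTop (𝓝 (c / Real.sqrt 2)) :=
    hclim.div_const _
  have hev : ∀ᶠ n in atTop, BallCover (Sset (ψn n) r) N := by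
    filter_upwards [hlim.eventually (Ioo_mem_nhds hκc hcs)] with n hn
    refine hN (cn n) (cn n / Real.sqrt 2) (ψn n) (hcn n).1 hn.1.le hn.2.le ?_ (hW n)
    rw [div_pow, hsq]; ring
  -- the remaining finitely many sets are bounded, hence contained in a single ball
  have hone : ∀ n, ∃ N', BallCover (Sset (ψn n) r) N' := fun n => by
    obtain ⟨L, hL⟩ := exists_bound_of_tendsto (hW n).lim (hr.trans hc1)
    obtain ⟨N', hN'⟩ := BallCover.of_cover (ρ := max L 2) (lt_max_of_lt_right (by norm_num)) 1
    refine ⟨N', hN' _ ⟨{0}, by simp, fun x hx => ?_⟩⟩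
    have : ‖x‖ ≤ L := hL x (le_of_lt hx)
    simp [this]
  choose f hf using hone
  obtain ⟨n₀, hn₀⟩ := eventually_atTop.1 hev
  refine ⟨max N ((Finset.range n₀).sup f), fun n => ?_⟩
  change BallCover (Sset (ψn n) r) _
  rcases le_or_gt n₀ n with h | h
  · exact (hn₀ n h).mono (le_max_left _ _)
  · exact (hf n).mono ((Finset.le_sup (Finset.mem_range.2 h)).trans (le_max_right _ _))
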